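/- Fix ε > 0. Then as x → ∞, the number of integers n with 1 ≤ n ≤ x for which there exists a positive integer d ≤ (log log x)^{1−ε} with d ∤ σ(n) is o(x). (That is, almost always σ(n) is divisible by every positive integer d ≤ (log log x)^{1−ε}.) -/

import Mathlib

open scoped Classical
open Filter Finset

/-- `sigma1 n` is `σ(n)`, the sum of all positive divisors of `n`. -/
def sigma1 (n : ℕ) : ℕ := ArithmeticFunction.sigma 1 n

/-- `s n` is the sum of the proper divisors of `n`, i.e. `σ(n) − n`. -/
def s (n : ℕ) : ℕ := sigma1 n - n

/-!
Write `y = log (log x)`. If a prime `p ≡ -1 (mod d)` divides `n` exactly once, then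
`d ∣ p + 1 ∣ σ(n)`. Only `O(x / y)` integers `n ≤ x` are divisible by the square of some `m > y`, so
it suffices to show that, for each `d ≤ y ^ (1 - ε)`, few `n ≤ x` avoid all the primes
`p ≡ -1 (mod d)` in the range `y < p ≤ exp (exp (y / 2))`. By Brun's sieve the proportion of such
`n` is exponentially small in the sum of `1 / p` over these primes. That sum is at least
`y ^ (ε / 2)`, because its main term has order `y / φ(d)`; this has to hold uniformly in `d`.

The uniformity comes from the Dirichlet `L`-functions at `1 + δ` with `δ = exp (-y / 4)`. By
orthogonality it is enough to bound `|L(1 + δ, χ)|` from below by a fixed power of `1 / d` for every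
nontrivial `χ` modulo `d`. For non-quadratic `χ` this is the `3-4-1` inequality, and for quadratic
`χ` it is a quantitative form of Monsky's argument, which compares the Lambert series of `χ` near
`q = 1` with the contribution of the squares.
-/

open scoped Topology

section SummationByParts

variable {E : Type*} [SeminormedAddCommGroup E] [NormedSpace ℝ E]

theorem norm_sum_range_smul_le {a : ℕ → E} {D : ℝ} (ha : ∀ n, ‖∑ i ∈ range n, a i‖ ≤ D)
    (f : ℕ → ℝ) (n : ℕ) :
    ‖∑ i ∈ range (n + 1), f i • a i‖ ≤ D * (|f n| + ∑ i ∈ range n, |f i - f (i + 1)|) := by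
  rw [sum_range_by_parts, Nat.add_sub_cancel, mul_add, mul_comm D, mul_sum]
  refine (norm_sub_le _ _).trans (add_le_add ?_ ((norm_sum_le _ _).trans ?_))
  · rw [norm_smul, Real.norm_eq_abs]
    gcongr
    exact ha _
  · refine sum_le_sum fun i _ ↦ ?_
    rw [norm_smul, Real.norm_eq_abs, abs_sub_comm, mul_comm]
    gcongr
    exact ha _

theorem norm_le_mul_tsum_of_hasSum_smul {a : ℕ → E} {f v : ℕ → ℝ} {D : ℝ} {S : E}
    (ha : ∀ n, ‖∑ i ∈ range n, a i‖ ≤ D) (hf : Tendsto f atTop (𝓝 0))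
    (hfv : ∀ i, |f i - f (i + 1)| ≤ v i) (hv : Summable v)
    (hS : HasSum (fun i ↦ f i • a i) S) : ‖S‖ ≤ D * ∑' i, v i := by
  have hD : 0 ≤ D := (norm_nonneg _).trans (ha 0)
  have hbound (n : ℕ) : ‖∑ i ∈ range (n + 1), f i • a i‖ ≤ D * (|f n| + ∑' i, v i) := by
    refine (norm_sum_range_smul_le ha f n).trans ?_
    gcongr
    exact (sum_le_sum fun i _ ↦ hfv i).trans
      (hv.sum_le_tsum _ fun i _ ↦ (abs_nonneg _).trans (hfv i))
  have hlim : Tendsto (fun n ↦ D * (|f n| + ∑' i, v i)) atTop (𝓝 (D * (|0| + ∑' i, v i))) :=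
    (hf.abs.add_const _).const_mul D
  have hsum := (hS.tendsto_sum_nat.comp (tendsto_add_atTop_nat 1)).norm
  simpa using le_of_tendsto_of_tendsto' hsum hlim hbound

theorem hasSum_sub_succ_of_antitone {f : ℕ → ℝ} (hf : Antitone f)
    (hf0 : Tendsto f atTop (𝓝 0)) : HasSum (fun i ↦ f i - f (i + 1)) (f 0) := by
  rw [hasSum_iff_tendsto_nat_of_nonneg fun i ↦ sub_nonneg.mpr (hf i.le_succ)]
  simpa only [sum_range_sub', sub_zero] using hf0.const_sub (f 0)

theorem norm_le_mul_of_hasSum_smul_of_antitone {a : ℕ → E} {f : ℕ → ℝ} {D : ℝ} {S : E}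
    (ha : ∀ n, ‖∑ i ∈ range n, a i‖ ≤ D) (hf : Antitone f) (hf0 : Tendsto f atTop (𝓝 0))
    (hS : HasSum (fun i ↦ f i • a i) S) : ‖S‖ ≤ D * f 0 := by
  have htel := hasSum_sub_succ_of_antitone hf hf0
  rw [← htel.tsum_eq]
  exact norm_le_mul_tsum_of_hasSum_smul ha hf0
    (fun i ↦ (abs_of_nonneg (sub_nonneg.mpr (hf i.le_succ))).le) htel.summable hS

end SummationByParts

section PeriodicSums

variable {E : Type*} [SeminormedAddCommGroup E]

theorem norm_sum_range_le_of_periodic {f : ℕ → E} {d : ℕ} (hf : Function.Periodic f d)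
    (hd : 0 < d) (hsum : ∑ i ∈ range d, f i = 0) (hbound : ∀ i, ‖f i‖ ≤ 1) (n : ℕ) :
    ‖∑ i ∈ range n, f i‖ ≤ d := by
  induction n using Nat.strong_induction_on with
  | _ n ih =>
    obtain hn | ⟨m, rfl⟩ := (lt_or_ge n d).imp_right Nat.exists_eq_add_of_le
    · calc ‖∑ i ∈ range n, f i‖ ≤ ∑ _i ∈ range n, (1 : ℝ) :=
            (norm_sum_le _ _).trans (sum_le_sum fun i _ ↦ hbound i)
        _ ≤ d := by simpa using hn.le
    · have hshift (i : ℕ) : f (d + i) = f i := by rw [add_comm, hf]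
      simpa only [sum_range_add, hsum, zero_add, hshift] using ih m (by lia)

theorem norm_sum_range_dirichletCharacter_le {d : ℕ} [NeZero d] {χ : DirichletCharacter ℂ d}
    (hχ : χ ≠ 1) (n : ℕ) : ‖∑ i ∈ range n, χ ((i + 1 : ℕ) : ZMod d)‖ ≤ d := by
  have hperiod : ∑ i ∈ range d, χ ((i + 1 : ℕ) : ZMod d) = 0 := by
    rw [← MulChar.sum_eq_zero_of_ne_one hχ]
    refine sum_bij (fun i _ ↦ ((i + 1 : ℕ) : ZMod d)) (fun _ _ ↦ mem_univ _) ?_ ?_ fun _ _ ↦ rfl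
    · intro i hi j hj hij
      have hmod : i ≡ j [MOD d] :=
        Nat.ModEq.add_right_cancel' 1 ((ZMod.natCast_eq_natCast_iff _ _ _).mp hij)
      exact hmod.eq_of_lt_of_lt (mem_range.mp hi) (mem_range.mp hj)
    · intro b _
      exact ⟨(b - 1).val, mem_range.mpr (ZMod.val_lt _), by simp⟩
  exact norm_sum_range_le_of_periodic (fun i ↦ by simp) (NeZero.pos d) hperiod
    (fun i ↦ χ.norm_le_one _) n

end PeriodicSums

section RealPowers

theorem rpow_neg_sub_rpow_neg_le {a b α : ℝ} (ha : 0 < a) (hb : 0 < b) (hα : 0 ≤ α) :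
    a ^ (-α) - b ^ (-α) ≤ α * a ^ (-(1 + α)) * (b - a) := by
  have hratio : 1 - α * (b / a - 1) ≤ (b / a) ^ (-α) := by
    rw [Real.rpow_def_of_pos (by positivity)]
    have hlog := mul_le_mul_of_nonneg_left (Real.log_le_sub_one_of_pos (div_pos hb ha)) hα
    linarith [Real.add_one_le_exp (Real.log (b / a) * -α)]
  have hb' : b ^ (-α) = a ^ (-α) * (b / a) ^ (-α) := by
    rw [← Real.mul_rpow ha.le (by positivity), mul_div_cancel₀ _ ha.ne']
  have ha' : a ^ (-(1 + α)) * a = a ^ (-α) := by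
    rw [← Real.rpow_add_one ha.ne']
    ring_nf
  calc a ^ (-α) - b ^ (-α) = a ^ (-α) * (1 - (b / a) ^ (-α)) := by rw [hb']; ring
    _ ≤ a ^ (-α) * (α * (b / a - 1)) := by gcongr; linarith
    _ = α * a ^ (-(1 + α)) * (b - a) := by rw [← ha']; field_simp

theorem tendsto_add_natCast_rpow_neg (x : ℝ) {α : ℝ} (hα : 0 < α) :
    Tendsto (fun i : ℕ ↦ (x + i) ^ (-α)) atTop (𝓝 0) :=
  (tendsto_rpow_neg_atTop hα).comp
    (tendsto_atTop_add_const_left _ x tendsto_natCast_atTop_atTop)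

theorem antitone_add_natCast_rpow_neg {x α : ℝ} (hx : 0 < x) (hα : 0 ≤ α) :
    Antitone fun i : ℕ ↦ (x + i) ^ (-α) := fun i j hij ↦
  Real.rpow_le_rpow_of_nonpos (by positivity) (by gcongr) (neg_nonpos.mpr hα)

variable {x δ : ℝ}

theorem hasSum_add_natCast_rpow_neg_sub_succ (hx : 0 < x) (hδ : 0 < δ) :
    HasSum (fun i : ℕ ↦ (x + i) ^ (-δ) - (x + i + 1) ^ (-δ)) (x ^ (-δ)) := by
  simpa [add_assoc] using hasSum_sub_succ_of_antitone
    (antitone_add_natCast_rpow_neg hx hδ.le) (tendsto_add_natCast_rpow_neg x hδ)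

theorem add_natCast_add_one_rpow_le (hx : 0 < x) (hδ : 0 ≤ δ) (i : ℕ) :
    δ * (x + i + 1) ^ (-(1 + δ)) ≤ (x + i) ^ (-δ) - (x + i + 1) ^ (-δ) := by
  have h := rpow_neg_sub_rpow_neg_le (a := x + i + 1) (b := x + i) (by positivity)
    (by positivity) hδ
  linarith

theorem summable_add_natCast_rpow_neg (hx : 0 < x) (hδ : 0 < δ) :
    Summable fun i : ℕ ↦ (x + i) ^ (-(1 + δ)) := by
  have hscaled : Summable fun i : ℕ ↦ δ * (x + i + 1) ^ (-(1 + δ)) :=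
    (hasSum_add_natCast_rpow_neg_sub_succ hx hδ).summable.of_nonneg_of_le
      (fun i ↦ by positivity) (add_natCast_add_one_rpow_le hx hδ.le)
  rw [← summable_nat_add_iff 1]
  simpa [add_assoc] using (summable_mul_left_iff hδ.ne').mp hscaled

theorem tsum_add_natCast_add_one_rpow_neg_le (hx : 0 < x) (hδ : 0 < δ) :
    ∑' i : ℕ, (x + i + 1) ^ (-(1 + δ)) ≤ x ^ (-δ) / δ := by
  have htel := hasSum_add_natCast_rpow_neg_sub_succ hx hδ
  have hsummable : Summable fun i : ℕ ↦ (x + i + 1) ^ (-(1 + δ)) := by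
    simpa [add_right_comm] using summable_add_natCast_rpow_neg (x := x + 1) (by linarith) hδ
  rw [le_div_iff₀' hδ, ← tsum_mul_left, ← htel.tsum_eq]
  exact (hsummable.mul_left δ).tsum_le_tsum (add_natCast_add_one_rpow_le hx hδ.le) htel.summable

theorem le_tsum_add_natCast_rpow_neg (hx : 0 < x) (hδ : 0 < δ) :
    x ^ (-δ) / δ ≤ ∑' i : ℕ, (x + i) ^ (-(1 + δ)) := by
  have htel := hasSum_add_natCast_rpow_neg_sub_succ hx hδ
  rw [div_le_iff₀' hδ, ← tsum_mul_left, ← htel.tsum_eq]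
  refine htel.summable.tsum_le_tsum (fun i ↦ ?_) ((summable_add_natCast_rpow_neg hx hδ).mul_left δ)
  have h := rpow_neg_sub_rpow_neg_le (a := x + i) (b := x + i + 1) (by positivity)
    (by positivity) hδ.le
  linarith

theorem tsum_one_add_natCast_rpow_neg_le (hδ : 0 < δ) :
    ∑' i : ℕ, (1 + i : ℝ) ^ (-(1 + δ)) ≤ 1 + 1 / δ := by
  have htail := tsum_add_natCast_add_one_rpow_neg_le one_pos hδ
  rw [Real.one_rpow] at htail
  rw [(summable_add_natCast_rpow_neg one_pos hδ).tsum_eq_zero_add]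
  simpa [add_assoc] using htail

end RealPowers

section LipschitzPowers

variable {σ τ x : ℝ}

theorem one_sub_rpow_neg_le_mul_rpow_half {δ : ℝ} (hδ : 0 ≤ δ) (hx : 1 ≤ x) :
    1 - (x + 1) ^ (-δ) ≤ δ * (3 * x ^ (1 / 2 : ℝ)) := by
  have hsqrt : (x + 1) ^ (1 / 2 : ℝ) ≤ 3 / 2 * x ^ (1 / 2 : ℝ) := by
    rw [← Real.sqrt_eq_rpow, ← Real.sqrt_eq_rpow, Real.sqrt_le_iff, mul_pow,
      Real.sq_sqrt (by linarith)]
    exact ⟨by positivity, by linarith⟩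
  have hlog : Real.log (x + 1) ≤ 3 * x ^ (1 / 2 : ℝ) := by
    have := Real.log_le_rpow_div (x := x + 1) (ε := 1 / 2) (by linarith) (by norm_num)
    linarith
  rw [Real.rpow_def_of_pos (by linarith)]
  linarith [Real.add_one_le_exp (Real.log (x + 1) * -δ), mul_le_mul_of_nonneg_left hlog hδ]

/- Writing `x ^ (-τ) = u * p` and `(x + 1) ^ (-τ) = v * q`, the quantity to bound is the difference
`(u - v) * (1 - q) - u * (p - q)` of two nonnegative terms, each of order `x ^ (-3 / 2)`. -/
theorem abs_rpow_neg_sub_sub_succ_le (hσ : 1 ≤ σ) (hστ : σ ≤ τ) (hσ2 : σ ≤ 2) (hx : 1 ≤ x) :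
    |(x ^ (-σ) - x ^ (-τ)) - ((x + 1) ^ (-σ) - (x + 1) ^ (-τ))|
      ≤ (τ - σ) * (6 * x ^ (-(1 + 1 / 2 : ℝ))) := by
  have hx0 : 0 < x := by linarith
  have hsplit {z : ℝ} (hz : 0 < z) : z ^ (-τ) = z ^ (-σ) * z ^ (-(τ - σ)) := by
    rw [← Real.rpow_add hz]
    ring_nf
  have hstep {α : ℝ} (hα : 0 ≤ α) : x ^ (-α) - (x + 1) ^ (-α) ≤ α * x ^ (-(1 + α)) := by
    simpa using rpow_neg_sub_rpow_neg_le hx0 (by linarith : 0 < x + 1) hα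
  have hmono {α : ℝ} (hα : 0 ≤ α) : (x + 1) ^ (-α) ≤ x ^ (-α) :=
    Real.rpow_le_rpow_of_nonpos hx0 (by linarith) (by linarith)
  rw [hsplit hx0, hsplit (by linarith : 0 < x + 1)]
  set δ := τ - σ
  have hδ : 0 ≤ δ := sub_nonneg.mpr hστ
  have hone : (x + 1) ^ (-δ) ≤ 1 :=
    Real.rpow_le_one_of_one_le_of_nonpos (by linarith) (by linarith)
  have hmain : (x ^ (-σ) - (x + 1) ^ (-σ)) * (1 - (x + 1) ^ (-δ))
      ≤ δ * (6 * x ^ (-(1 + 1 / 2 : ℝ))) := by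
    have hpow : x ^ (-(1 + σ)) ≤ x ^ (-2 : ℝ) :=
      Real.rpow_le_rpow_of_exponent_le hx (by linarith)
    calc _ ≤ (2 * x ^ (-2 : ℝ)) * (δ * (3 * x ^ (1 / 2 : ℝ))) := by
          refine mul_le_mul ((hstep (by linarith)).trans (by gcongr))
            (one_sub_rpow_neg_le_mul_rpow_half hδ hx) (by linarith) (by positivity)
      _ = δ * (6 * (x ^ (-2 : ℝ) * x ^ (1 / 2 : ℝ))) := by ring
      _ = _ := by rw [← Real.rpow_add hx0]; norm_num
  have hsub : x ^ (-σ) * (x ^ (-δ) - (x + 1) ^ (-δ)) ≤ δ * (6 * x ^ (-(1 + 1 / 2 : ℝ))) := by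
    calc _ ≤ x ^ (-σ) * (δ * x ^ (-(1 + δ))) := by gcongr; exact hstep hδ
      _ = δ * (1 * x ^ (-(1 + σ + δ))) := by
          rw [mul_left_comm, ← Real.rpow_add hx0]; ring_nf
      _ ≤ _ := by
          gcongr ?_ * (?_ * ?_)
          · norm_num
          · exact Real.rpow_le_rpow_of_exponent_le hx (by linarith)
  have hmain0 : 0 ≤ (x ^ (-σ) - (x + 1) ^ (-σ)) * (1 - (x + 1) ^ (-δ)) :=
    mul_nonneg (sub_nonneg.mpr (hmono (by linarith))) (sub_nonneg.mpr hone)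
  have hsub0 : 0 ≤ x ^ (-σ) * (x ^ (-δ) - (x + 1) ^ (-δ)) :=
    mul_nonneg (by positivity) (sub_nonneg.mpr (hmono hδ))
  rw [abs_le]
  constructor <;> linarith

end LipschitzPowers

section LSeriesOnRealAxis

theorem hasSum_LSeries_ofReal {f : ℕ → ℂ} {σ : ℝ} (hf : LSeriesSummable f σ) :
    HasSum (fun i : ℕ ↦ ((1 + i : ℝ) ^ (-σ)) • f (i + 1)) (LSeries f σ) := by
  have h := (hasSum_nat_add_iff' 1).mpr hf.hasSum
  simp only [range_one, sum_singleton, LSeries.term_zero, sub_zero] at h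
  refine h.congr_fun fun i ↦ ?_
  rw [LSeries.term_of_ne_zero (Nat.succ_ne_zero i), Complex.real_smul,
    Complex.ofReal_cpow (by positivity), add_comm (1 : ℝ)]
  push_cast
  rw [Complex.cpow_neg, div_eq_inv_mul]

theorem norm_LSeries_le_of_norm_sum_range_le {f : ℕ → ℂ} {D σ : ℝ}
    (hD : ∀ n, ‖∑ i ∈ range n, f (i + 1)‖ ≤ D) (hσ : 0 < σ) (hf : LSeriesSummable f σ) :
    ‖LSeries f σ‖ ≤ D := by
  simpa using norm_le_mul_of_hasSum_smul_of_antitone hD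
    (antitone_add_natCast_rpow_neg one_pos hσ.le) (tendsto_add_natCast_rpow_neg 1 hσ)
    (hasSum_LSeries_ofReal hf)

theorem norm_LSeries_sub_le_of_norm_sum_range_le {f : ℕ → ℂ} {D σ τ : ℝ}
    (hD : ∀ n, ‖∑ i ∈ range n, f (i + 1)‖ ≤ D) (hσ : 1 ≤ σ) (hστ : σ ≤ τ) (hσ2 : σ ≤ 2)
    (hfσ : LSeriesSummable f σ) (hfτ : LSeriesSummable f τ) :
    ‖LSeries f σ - LSeries f τ‖ ≤ 18 * D * (τ - σ) := by
  have hD0 : 0 ≤ D := (norm_nonneg _).trans (hD 0)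
  have hsum : HasSum (fun i : ℕ ↦ ((1 + i : ℝ) ^ (-σ) - (1 + i : ℝ) ^ (-τ)) • f (i + 1))
      (LSeries f σ - LSeries f τ) := by
    simpa only [sub_smul] using (hasSum_LSeries_ofReal hfσ).sub (hasSum_LSeries_ofReal hfτ)
  have hlim := (tendsto_add_natCast_rpow_neg 1 (by linarith : 0 < σ)).sub
    (tendsto_add_natCast_rpow_neg 1 (by linarith : 0 < τ))
  rw [sub_zero] at hlim
  have hvar (i : ℕ) : |((1 + i : ℝ) ^ (-σ) - (1 + i : ℝ) ^ (-τ))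
      - ((1 + (i + 1 : ℕ) : ℝ) ^ (-σ) - (1 + (i + 1 : ℕ) : ℝ) ^ (-τ))|
      ≤ (τ - σ) * (6 * (1 + i : ℝ) ^ (-(1 + 1 / 2 : ℝ))) := by
    simpa [add_assoc] using
      abs_rpow_neg_sub_sub_succ_le (x := 1 + i) hσ hστ hσ2 (by simp)
  have hsummable := (summable_add_natCast_rpow_neg one_pos (δ := 1 / 2) (by norm_num))
  have hzeta := tsum_one_add_natCast_rpow_neg_le (δ := 1 / 2) (by norm_num)
  calc _ ≤ D * ∑' i : ℕ, (τ - σ) * (6 * (1 + i : ℝ) ^ (-(1 + 1 / 2 : ℝ))) :=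
        norm_le_mul_tsum_of_hasSum_smul hD hlim hvar ((hsummable.mul_left _).mul_left _) hsum
    _ = 6 * D * (τ - σ) * ∑' i : ℕ, (1 + i : ℝ) ^ (-(1 + 1 / 2 : ℝ)) := by
        rw [tsum_mul_left, tsum_mul_left]
        ring
    _ ≤ 6 * D * (τ - σ) * 3 := by
        have := sub_nonneg.mpr hστ
        gcongr
        exact hzeta.trans (by norm_num)
    _ = 18 * D * (τ - σ) := by ring

variable {d : ℕ}

theorem lseriesSummable_dirichletCharacter (χ : DirichletCharacter ℂ d) {σ : ℝ} (hσ : 1 < σ) :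
    LSeriesSummable (fun n ↦ χ n) σ :=
  χ.LSeriesSummable_of_one_lt_re (by simpa using hσ)

theorem norm_LSeries_le_one_add_one_div (χ : DirichletCharacter ℂ d) {δ : ℝ} (hδ : 0 < δ) :
    ‖LSeries (fun n ↦ χ n) (1 + δ : ℝ)‖ ≤ 1 + 1 / δ := by
  refine le_trans ?_ (tsum_one_add_natCast_rpow_neg_le hδ)
  have h := hasSum_LSeries_ofReal (lseriesSummable_dirichletCharacter χ (by linarith : 1 < 1 + δ))
  rw [← h.tsum_eq]
  refine tsum_of_norm_bounded (summable_add_natCast_rpow_neg one_pos hδ).hasSum fun i ↦ ?_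
  rw [norm_smul, Real.norm_of_nonneg (by positivity)]
  exact mul_le_of_le_one_right (by positivity) (χ.norm_le_one _)

variable [NeZero d]

theorem norm_LSeries_dirichletCharacter_le {χ : DirichletCharacter ℂ d} (hχ : χ ≠ 1) {σ : ℝ}
    (hσ : 1 < σ) : ‖LSeries (fun n ↦ χ n) σ‖ ≤ d :=
  norm_LSeries_le_of_norm_sum_range_le (norm_sum_range_dirichletCharacter_le hχ)
    (by linarith) (lseriesSummable_dirichletCharacter χ hσ)

theorem norm_LSeries_dirichletCharacter_sub_le {χ : DirichletCharacter ℂ d} (hχ : χ ≠ 1)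
    {σ τ : ℝ} (hσ : 1 < σ) (hστ : σ ≤ τ) (hσ2 : σ ≤ 2) :
    ‖LSeries (fun n ↦ χ n) σ - LSeries (fun n ↦ χ n) τ‖ ≤ 18 * d * (τ - σ) :=
  norm_LSeries_sub_le_of_norm_sum_range_le (norm_sum_range_dirichletCharacter_le hχ) hσ.le hστ
    hσ2 (lseriesSummable_dirichletCharacter χ hσ)
    (lseriesSummable_dirichletCharacter χ (hσ.trans_le hστ))

/- The terms with `n ≡ 1 [MOD d]` alone contribute `d ^ (-(1 + δ))` times a zeta-like sum. -/
theorem one_div_le_norm_LSeries_one {δ : ℝ} (hδ : 0 < δ) (hδ1 : δ ≤ 1) :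
    1 / (d ^ 2 * δ) ≤ ‖LSeries (fun n ↦ (1 : DirichletCharacter ℂ d) n) (1 + δ : ℝ)‖ := by
  have hd : (1 : ℝ) ≤ d := by exact_mod_cast NeZero.pos d
  have hsummable := lseriesSummable_dirichletCharacter (1 : DirichletCharacter ℂ d)
    (by linarith : 1 < 1 + δ)
  have hsum := Complex.hasSum_re (hasSum_LSeries_ofReal hsummable)
  set g : ℕ → ℝ := fun i ↦
    ((1 + i : ℝ) ^ (-(1 + δ)) • (1 : DirichletCharacter ℂ d) ((i + 1 : ℕ) : ZMod d)).re with hg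
  have hterm (m : ℕ) : (d : ℝ) ^ (-2 : ℝ) * (1 + m : ℝ) ^ (-(1 + δ)) ≤ g (d * m) := by
    have hone : (1 : DirichletCharacter ℂ d) ((d * m + 1 : ℕ) : ZMod d) = 1 := by simp
    simp only [hg, hone, Complex.real_smul, mul_one, Complex.ofReal_re]
    calc (d : ℝ) ^ (-2 : ℝ) * (1 + m : ℝ) ^ (-(1 + δ))
        ≤ (d : ℝ) ^ (-(1 + δ)) * (1 + m : ℝ) ^ (-(1 + δ)) := by
          gcongr ?_ * _
          exact Real.rpow_le_rpow_of_exponent_le hd (by linarith)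
      _ = (d * (1 + m) : ℝ) ^ (-(1 + δ)) := (Real.mul_rpow (by positivity) (by positivity)).symm
      _ ≤ (1 + (d * m : ℕ) : ℝ) ^ (-(1 + δ)) :=
          Real.rpow_le_rpow_of_nonpos (by positivity) (by push_cast; linarith) (by linarith)
  have hnonneg (i : ℕ) : 0 ≤ g i := by
    by_cases hi : IsUnit ((i + 1 : ℕ) : ZMod d)
    · simp only [hg, MulChar.one_apply hi, Complex.real_smul, mul_one, Complex.ofReal_re]
      positivity
    · simp only [hg, MulChar.map_nonunit _ hi, smul_zero, Complex.zero_re, le_refl]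
  have hinj : Function.Injective (d * ·) := mul_right_injective₀ (NeZero.ne d)
  calc 1 / (d ^ 2 * δ) = (d : ℝ) ^ (-2 : ℝ) * ((1 : ℝ) ^ (-δ) / δ) := by
        rw [Real.one_rpow, Real.rpow_neg (by positivity), Real.rpow_two]
        field_simp
    _ ≤ ∑' m : ℕ, (d : ℝ) ^ (-2 : ℝ) * (1 + m : ℝ) ^ (-(1 + δ)) := by
        rw [tsum_mul_left]
        gcongr
        exact le_tsum_add_natCast_rpow_neg one_pos hδ
    _ ≤ ∑' m : ℕ, g (d * m) :=
        ((summable_add_natCast_rpow_neg one_pos hδ).mul_left _).tsum_le_tsum hterm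
          (hsum.summable.comp_injective hinj)
    _ ≤ ∑' i : ℕ, g i := tsum_comp_le_tsum_of_inj hsum.summable hnonneg hinj
    _ ≤ _ := hsum.tsum_eq.trans_le (Complex.re_le_norm _)

end LSeriesOnRealAxis

section MonskySequence

theorem succ_mul_pow_le_geom_sum_sq (u : ℝ) (m : ℕ) :
    (m + 1) * u ^ m ≤ ∑ i ∈ range (m + 1), (u ^ 2) ^ i := by
  have hpair : ∑ i ∈ range (m + 1), 2 * u ^ m
      ≤ ∑ i ∈ range (m + 1), ((u ^ 2) ^ i + (u ^ 2) ^ (m - i)) := by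
    refine sum_le_sum fun i hi ↦ ?_
    have hsplit : u ^ m = u ^ i * u ^ (m - i) := by
      rw [← pow_add, Nat.add_sub_cancel' (mem_range_succ_iff.mp hi)]
    rw [hsplit, pow_right_comm u 2, pow_right_comm u 2, ← mul_assoc]
    exact two_mul_le_add_sq _ _
  have hreflect := sum_range_reflect (fun i ↦ (u ^ 2) ^ i) (m + 1)
  simp only [Nat.add_sub_cancel] at hreflect
  rw [sum_add_distrib, hreflect, sum_const, card_range, nsmul_eq_mul] at hpair
  push_cast at hpair
  linarith

theorem mul_succ_mul_pow_le_geom_sum_mul {t : ℝ} (h0 : 0 ≤ t) (h1 : t ≤ 1) (n : ℕ) :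
    n * (n + 1) * t ^ n ≤ (∑ i ∈ range n, t ^ i) * ∑ i ∈ range (n + 1), t ^ i := by
  obtain ⟨u, hu, rfl⟩ : ∃ u : ℝ, 0 ≤ u ∧ u ^ 2 = t := ⟨√t, t.sqrt_nonneg, Real.sq_sqrt h0⟩
  cases n with
  | zero => simp
  | succ m =>
    have hpow : (u ^ 2) ^ (m + 1) ≤ u ^ m * u ^ (m + 1) := by
      rw [← pow_mul, ← pow_add]
      exact pow_le_pow_of_le_one hu ((sq_le_one_iff₀ hu).mp h1) (by lia)
    calc _ ≤ ((m + 1 : ℕ) : ℝ) * ((m + 1 : ℕ) + 1) * (u ^ m * u ^ (m + 1)) := by gcongr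
      _ = ((m + 1) * u ^ m) * (((m + 1 : ℕ) + 1) * u ^ (m + 1)) := by push_cast; ring
      _ ≤ _ := by
          gcongr
          · exact succ_mul_pow_le_geom_sum_sq u m
          · exact succ_mul_pow_le_geom_sum_sq u (m + 1)

/-- Up to the shift `n = i + 1`, the sequence `1 / (n (1 - t)) - t ^ n / (1 - t ^ n)` with which
Monsky compares `L(1, χ) / (1 - t)` to the Lambert series of `χ` at `t`. -/
noncomputable def monskySeq (t : ℝ) (i : ℕ) : ℝ :=
  1 / ((i + 1) * (1 - t)) - t ^ (i + 1) / (1 - t ^ (i + 1))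

variable {t : ℝ}

theorem monskySeq_zero (ht : t < 1) : monskySeq t 0 = 1 := by
  have : 1 - t ≠ 0 := by linarith
  simp only [monskySeq, Nat.cast_zero, zero_add, one_mul, pow_one]
  field_simp

theorem antitone_monskySeq (h0 : 0 ≤ t) (h1 : t < 1) : Antitone (monskySeq t) := by
  refine antitone_nat_of_succ_le fun i ↦ ?_
  let G (n : ℕ) : ℝ := ∑ j ∈ range n, t ^ j
  have hG (n : ℕ) : 1 - t ^ n = (1 - t) * G n := (mul_neg_geom_sum t n).symm
  have hGpos (n : ℕ) : 0 < G (n + 1) := geom_sum_pos h0 n.succ_ne_zero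
  have hGsucc : G (i + 2) = t * G (i + 1) + 1 := geom_sum_succ
  have hamgm : ((i + 1 : ℕ) : ℝ) * ((i + 1 : ℕ) + 1) * t ^ (i + 1) ≤ G (i + 1) * G (i + 2) :=
    mul_succ_mul_pow_le_geom_sum_mul h0 h1.le (i + 1)
  have ht : 0 < 1 - t := by linarith
  have hdiff : monskySeq t i - monskySeq t (i + 1) = (1 - t)⁻¹ *
      (1 / ((i + 1) * (i + 2)) - t ^ (i + 1) / (G (i + 1) * G (i + 2))) := by
    simp only [monskySeq, hG]
    have := (hGpos i).ne'
    have := (hGpos (i + 1)).ne'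
    rw [pow_succ t (i + 1)]
    push_cast
    field_simp
    rw [hGsucc]
    ring
  rw [← sub_nonneg, hdiff]
  refine mul_nonneg (inv_nonneg.mpr ht.le) (sub_nonneg.mpr ?_)
  rw [div_le_div_iff₀ (mul_pos (hGpos i) (hGpos (i + 1))) (by positivity)]
  push_cast at hamgm
  linarith

theorem tendsto_monskySeq (h0 : 0 ≤ t) (h1 : t < 1) : Tendsto (monskySeq t) atTop (𝓝 0) := by
  have hharm : Tendsto (fun i : ℕ ↦ 1 / ((i + 1) * (1 - t))) atTop (𝓝 0) := by
    simpa [div_eq_inv_mul] using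
      (tendsto_one_div_add_atTop_nhds_zero_nat (𝕜 := ℝ)).div_const (1 - t)
  have hpow : Tendsto (fun i : ℕ ↦ t ^ (i + 1)) atTop (𝓝 0) :=
    (tendsto_pow_atTop_nhds_zero_of_lt_one h0 h1).comp (tendsto_add_atTop_nat 1)
  unfold monskySeq
  simpa using hharm.sub (hpow.div (hpow.const_sub 1) (by norm_num))

end MonskySequence

section LambertSeries

/-- The Lambert series `∑ f n * q ^ n / (1 - q ^ n)` of `f` at `q`, written as the double series
`∑ f n * q ^ (n * m)`. -/
noncomputable def lambertSeries (f : ℕ → ℂ) (q : ℂ) : ℂ :=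
  ∑' c : ℕ+ × ℕ+, f c.1 * q ^ (c.1 * c.2 : ℕ)

variable {f : ℕ → ℂ} {q : ℂ}

theorem hasSum_lambertSeries_prod (hf : ∀ n, ‖f n‖ ≤ 1) (hq : ‖q‖ < 1) :
    HasSum (fun c : ℕ+ × ℕ+ ↦ f c.1 * q ^ (c.1 * c.2 : ℕ)) (lambertSeries f q) := by
  refine (Summable.of_norm_bounded (summable_prod_mul_pow 0 (r := ‖q‖) (by simpa)) ?_).hasSum
  intro c
  rw [norm_mul, norm_pow, pow_zero]
  gcongr
  exact hf _

theorem hasSum_lambertSeries (hf : ∀ n, ‖f n‖ ≤ 1) (hq : ‖q‖ < 1) :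
    HasSum (fun i : ℕ ↦ f (i + 1) * (q ^ (i + 1) / (1 - q ^ (i + 1)))) (lambertSeries f q) := by
  have hpnat : HasSum (fun n : ℕ+ ↦ f n * (q ^ (n : ℕ) / (1 - q ^ (n : ℕ))))
      (lambertSeries f q) := by
    refine (hasSum_lambertSeries_prod hf hq).prod_fiberwise fun n ↦ ?_
    have hqn : ‖q ^ (n : ℕ)‖ < 1 := by
      rw [norm_pow]
      exact pow_lt_one₀ (norm_nonneg q) hq n.ne_zero
    rw [← Equiv.pnatEquivNat.symm.hasSum_iff, div_eq_mul_inv]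
    refine (((hasSum_geometric_of_norm_lt_one hqn).mul_left _).mul_left _).congr_fun fun i ↦ ?_
    simp [← pow_mul, ← pow_add, mul_add, add_comm]
  rw [← Equiv.pnatEquivNat.symm.hasSum_iff] at hpnat
  exact hpnat

theorem hasSum_lambertSeries_divisors (hf : ∀ n, ‖f n‖ ≤ 1) (hq : ‖q‖ < 1) :
    HasSum (fun N : ℕ+ ↦ (∑ n ∈ (N : ℕ).divisors, f n) * q ^ (N : ℕ)) (lambertSeries f q) := by
  refine (sigmaAntidiagonalEquivProd.hasSum_iff.mpr (hasSum_lambertSeries_prod hf hq)).sigma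
    fun N ↦ ?_
  have hfibre : (∑ n ∈ (N : ℕ).divisors, f n) * q ^ (N : ℕ)
      = ∑ x ∈ (N : ℕ).divisorsAntidiagonal, f x.1 * q ^ (x.1 * x.2) := by
    rw [← Nat.sum_divisorsAntidiagonal (fun x _ ↦ f x), sum_mul]
    exact sum_congr rfl fun x hx ↦ by rw [(Nat.mem_divisorsAntidiagonal.mp hx).1]
  rw [hfibre, ← sum_coe_sort]
  exact hasSum_fintype _

end LambertSeries

section QuadraticCharacters

open scoped ComplexOrder

variable {d : ℕ} {χ : DirichletCharacter ℂ d}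

theorem zetaMul_eq_sum_divisors (χ : DirichletCharacter ℂ d) (n : ℕ) :
    χ.zetaMul n = ∑ m ∈ n.divisors, χ m := by
  rw [DirichletCharacter.zetaMul, ArithmeticFunction.coe_zeta_mul_apply]
  refine sum_congr rfl fun m hm ↦ ?_
  simp [toArithmeticFunction, (Nat.pos_of_mem_divisors hm).ne']

theorem one_le_zetaMul_prime_pow_two_mul (hχ : χ ^ 2 = 1) {p : ℕ} (hp : p.Prime) (k : ℕ) :
    1 ≤ χ.zetaMul (p ^ (2 * k)) := by
  rw [zetaMul_eq_sum_divisors, Nat.sum_divisors_prime_pow hp]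
  push_cast [map_pow]
  rcases MulChar.isQuadratic_iff_sq_eq_one.mpr hχ p with h | h | h
  · simp [h, sum_range_succ']
  · simp only [h, one_pow, sum_const, card_range, nsmul_eq_mul, mul_one]
    exact_mod_cast Nat.le_add_left 1 (2 * k)
  · simp [h, neg_one_geom_sum]

theorem one_le_zetaMul_sq (hχ : χ ^ 2 = 1) {m : ℕ} (hm : m ≠ 0) : 1 ≤ χ.zetaMul (m ^ 2) := by
  rw [χ.isMultiplicative_zetaMul.multiplicative_factorization _ (pow_ne_zero 2 hm),
    Nat.factorization_pow]
  exact one_le_prod fun p hp ↦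
    one_le_zetaMul_prime_pow_two_mul hχ (Nat.prime_of_mem_primeFactors (by simpa using hp)) _

theorem half_le_pow_sq {t : ℝ} {M m : ℕ} (h0 : 0 ≤ t) (hM : M ^ 2 * (1 - t) ≤ 1 / 2)
    (ht : t ≤ 1) (hm : m ≤ M) : 1 / 2 ≤ t ^ (m ^ 2) := by
  have hbernoulli := one_add_mul_le_pow (a := t - 1) (by linarith) (m ^ 2)
  have hmM : (m : ℝ) ^ 2 * (1 - t) ≤ M ^ 2 * (1 - t) := by
    have := sub_nonneg.mpr ht
    gcongr
  rw [add_sub_cancel] at hbernoulli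
  push_cast at hbernoulli
  linarith

/- Only the square terms `N = m ^ 2` with `m ≤ M` of the Lambert series are retained. -/
theorem div_two_le_re_lambertSeries (hχ : χ ^ 2 = 1) {t : ℝ} (h0 : 0 ≤ t) (h1 : t < 1) {M : ℕ}
    (hM : M ^ 2 * (1 - t) ≤ 1 / 2) : (M : ℝ) / 2 ≤ (lambertSeries (fun n ↦ χ n) t).re := by
  have hsum := Complex.hasSum_re (hasSum_lambertSeries_divisors (f := fun n ↦ χ n) (q := t)
    (fun n ↦ χ.norm_le_one _) (by rwa [Complex.norm_of_nonneg h0]))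
  simp only [← zetaMul_eq_sum_divisors, ← Complex.ofReal_pow, Complex.re_mul_ofReal] at hsum
  have hzeta {n : ℕ} : 0 ≤ (χ.zetaMul n).re :=
    (Complex.nonneg_iff.mp (DirichletCharacter.zetaMul_nonneg hχ n)).1
  let sq (m : ℕ) : ℕ+ := m.succPNat ^ 2
  have hsq : Function.Injective sq := fun a b hab ↦
    Nat.succPNat_injective ((pow_left_inj (two_ne_zero)).mp hab)
  calc (M : ℝ) / 2 = ∑ _m ∈ range M, 1 * (1 / 2 : ℝ) := by simp [div_eq_mul_inv]
    _ ≤ ∑ m ∈ range M, (χ.zetaMul (sq m)).re * t ^ (sq m : ℕ) := by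
        refine sum_le_sum fun m hm ↦ ?_
        gcongr
        · exact hzeta
        · simpa [sq] using (Complex.le_def.mp (one_le_zetaMul_sq hχ m.succ_ne_zero)).1
        · exact half_le_pow_sq h0 hM h1.le (mem_range.mp hm)
    _ = ∑ N ∈ (range M).image sq, (χ.zetaMul N).re * t ^ (N : ℕ) := by
        rw [sum_image fun a _ b _ h ↦ hsq h]
    _ ≤ _ := sum_le_hasSum _ (fun N _ ↦ mul_nonneg hzeta (by positivity)) hsum

end QuadraticCharacters

section MonskyArgument

variable {f : ℕ → ℂ} {σ t : ℝ}

theorem hasSum_monskySeq_sub_smul (hf : ∀ n, ‖f n‖ ≤ 1) (hσ : 1 < σ) (h0 : 0 ≤ t) (h1 : t < 1) :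
    HasSum (fun i : ℕ ↦ (monskySeq t i -
        (1 - t)⁻¹ * ((1 + i : ℝ) ^ (-1 : ℝ) - (1 + i : ℝ) ^ (-σ))) • f (i + 1))
      (((1 - t : ℝ) : ℂ)⁻¹ * LSeries f σ - lambertSeries f t) := by
  have hL := hasSum_LSeries_ofReal (LSeriesSummable_of_bounded_of_one_lt_re
    (fun n _ ↦ hf n) (by simpa using hσ : 1 < (σ : ℂ).re))
  have hlambert := hasSum_lambertSeries hf (by rwa [Complex.norm_of_nonneg h0] : ‖(t : ℂ)‖ < 1)
  refine ((hL.mul_left _).sub hlambert).congr_fun fun i ↦ ?_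
  simp only [monskySeq, Real.rpow_neg_one, Complex.real_smul, one_div, mul_inv]
  push_cast
  ring

/- `monskySeq t` is antitone and `n⁻¹ - n ^ (-σ)` has total variation `O(σ - 1)`, so the difference
can be summed by parts. -/
theorem norm_inv_mul_LSeries_sub_lambertSeries_le {D : ℝ} (hf : ∀ n, ‖f n‖ ≤ 1)
    (hD : ∀ n, ‖∑ i ∈ range n, f (i + 1)‖ ≤ D) (hσ : 1 < σ) (h0 : 0 ≤ t) (h1 : t < 1) :
    ‖((1 - t : ℝ) : ℂ)⁻¹ * LSeries f σ - lambertSeries f t‖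
      ≤ D * (1 + (1 - t)⁻¹ * (18 * (σ - 1))) := by
  have hc : 0 ≤ (1 - t)⁻¹ := inv_nonneg.mpr (by linarith)
  let g (i : ℕ) : ℝ := (1 + i : ℝ) ^ (-1 : ℝ) - (1 + i : ℝ) ^ (-σ)
  let v (i : ℕ) : ℝ := (1 - t)⁻¹ * ((σ - 1) * (6 * (1 + i : ℝ) ^ (-(1 + 1 / 2 : ℝ))))
  have hlim : Tendsto (fun i ↦ monskySeq t i - (1 - t)⁻¹ * g i) atTop (𝓝 0) := by
    have := (tendsto_add_natCast_rpow_neg 1 one_pos).sub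
      (tendsto_add_natCast_rpow_neg 1 (by linarith : 0 < σ))
    simpa using (tendsto_monskySeq h0 h1).sub (this.const_mul (1 - t)⁻¹)
  have hvar (i : ℕ) :
      |(monskySeq t i - (1 - t)⁻¹ * g i) - (monskySeq t (i + 1) - (1 - t)⁻¹ * g (i + 1))|
        ≤ (monskySeq t i - monskySeq t (i + 1)) + v i := by
    have hg : |g i - g (i + 1)| ≤ (σ - 1) * (6 * (1 + i : ℝ) ^ (-(1 + 1 / 2 : ℝ))) := by
      have := abs_rpow_neg_sub_sub_succ_le le_rfl hσ.le one_le_two (x := 1 + i) (by simp)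
      simpa [g, add_assoc] using this
    calc _ = |(monskySeq t i - monskySeq t (i + 1)) - (1 - t)⁻¹ * (g i - g (i + 1))| := by ring_nf
      _ ≤ |monskySeq t i - monskySeq t (i + 1)| + |(1 - t)⁻¹ * (g i - g (i + 1))| := abs_sub _ _
      _ ≤ _ := by
          rw [abs_of_nonneg (sub_nonneg.mpr (antitone_monskySeq h0 h1 i.le_succ)), abs_mul,
            abs_of_nonneg hc]
          exact add_le_add_right (mul_le_mul_of_nonneg_left hg hc) _
  have hmonsky : HasSum (fun i ↦ monskySeq t i - monskySeq t (i + 1)) 1 := by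
    simpa [monskySeq_zero h1] using
      hasSum_sub_succ_of_antitone (antitone_monskySeq h0 h1) (tendsto_monskySeq h0 h1)
  have hpow := summable_add_natCast_rpow_neg one_pos (by norm_num : (0 : ℝ) < 1 / 2)
  have hv : HasSum v ((1 - t)⁻¹ * ((σ - 1) * (6 * ∑' i : ℕ, (1 + i : ℝ) ^ (-(1 + 1 / 2 : ℝ))))) :=
    ((hpow.hasSum.mul_left 6).mul_left (σ - 1)).mul_left (1 - t)⁻¹
  have hzeta := tsum_one_add_natCast_rpow_neg_le (by norm_num : (0 : ℝ) < 1 / 2)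
  refine (norm_le_mul_tsum_of_hasSum_smul hD hlim hvar (hmonsky.add hv).summable
    (hasSum_monskySeq_sub_smul hf hσ h0 h1)).trans ?_
  rw [(hmonsky.add hv).tsum_eq]
  refine mul_le_mul_of_nonneg_left ?_ ((norm_nonneg _).trans (hD 0))
  have : 0 ≤ σ - 1 := by linarith
  rw [mul_comm 18]
  gcongr
  linarith

theorem one_div_le_norm_LSeries_of_sq_eq_one {d : ℕ} [NeZero d] {χ : DirichletCharacter ℂ d}
    (hχ : χ ≠ 1) (hχ2 : χ ^ 2 = 1) (hσ : 1 < σ) (hσd : (σ - 1) * (1152 * d ^ 2) ≤ 1) :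
    1 / (64 * d) ≤ ‖LSeries (fun n ↦ χ n) σ‖ := by
  have hd : (1 : ℝ) ≤ d := by exact_mod_cast NeZero.pos d
  obtain ⟨t, ht⟩ : ∃ t : ℝ, 1 - t = 1 / (32 * d ^ 2) := ⟨1 - 1 / (32 * d ^ 2), by ring⟩
  have hgap : 0 < 1 - t := by rw [ht]; positivity
  have h0 : 0 ≤ t := by
    have : 1 / (32 * (d : ℝ) ^ 2) ≤ 1 := by
      rw [div_le_one (by positivity)]
      nlinarith
    linarith
  have hlambert : (2 : ℝ) * d ≤ (lambertSeries (fun n ↦ χ n) t).re := by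
    have := div_two_le_re_lambertSeries hχ2 h0 (by linarith) (M := 4 * d)
      (by rw [ht]; push_cast; field_simp; norm_num)
    push_cast at this
    linarith
  have hdist := norm_inv_mul_LSeries_sub_lambertSeries_le (fun n ↦ χ.norm_le_one n)
    (norm_sum_range_dirichletCharacter_le hχ) hσ h0 (by linarith)
  have htriangle := norm_sub_norm_le (lambertSeries (fun n ↦ χ n) t)
    (((1 - t : ℝ) : ℂ)⁻¹ * LSeries (fun n ↦ χ n) σ)
  rw [norm_sub_rev, norm_mul, norm_inv, Complex.norm_of_nonneg hgap.le] at htriangle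
  have hinv : (1 - t)⁻¹ = 32 * d ^ 2 := by rw [ht, one_div, inv_inv]
  rw [hinv] at hdist htriangle
  have hbound : (d : ℝ) / 2 ≤ 32 * d ^ 2 * ‖LSeries (fun n ↦ χ n) σ‖ := by
    have herror : d * (1 + 32 * d ^ 2 * (18 * (σ - 1))) ≤ d * (3 / 2 : ℝ) := by
      gcongr
      linarith
    linarith [Complex.re_le_norm (lambertSeries (fun n ↦ χ n) t)]
  rw [div_le_iff₀ (by positivity)]
  refine le_of_mul_le_mul_left ?_ (by positivity : (0 : ℝ) < d / 2)
  linarith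

end MonskyArgument

section LSeriesLowerBound

variable {d : ℕ} [NeZero d] {χ : DirichletCharacter ℂ d} {δ : ℝ}

/- The `3-4-1` inequality at the point `1 + η`, where the factors `L(χ₀)` and `L(χ²)` are bounded
by `2 / η` and `d`; the Lipschitz bound then carries the estimate from `1 + η` down to `1 + δ`. -/
theorem one_div_le_norm_LSeries_of_sq_ne_one (hχ : χ ≠ 1) (hχ2 : χ ^ 2 ≠ 1) (hδ : 0 < δ)
    (hδd : δ * (2 * 10 ^ 7 * d ^ 5) ≤ 1) :
    1 / (2 * 10 ^ 6 * d ^ 4) ≤ ‖LSeries (fun n ↦ χ n) (1 + δ : ℝ)‖ := by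
  have hd : (1 : ℝ) ≤ d := by exact_mod_cast NeZero.pos d
  obtain ⟨η, hη⟩ : ∃ η : ℝ, η = 1 / (2 * 10 ^ 7 * d ^ 5) := ⟨_, rfl⟩
  have hη0 : 0 < η := by rw [hη]; positivity
  have hη1 : η ≤ 1 := by
    rw [hη, div_le_one (by positivity)]
    linarith [one_le_pow₀ hd (n := 5)]
  have hδη : δ ≤ η := by rwa [hη, le_div_iff₀ (by positivity)]
  let A := ‖LSeries (fun n ↦ χ n) (1 + η : ℝ)‖
  have hproduct : 1 ≤ (2 / η) ^ 3 * A ^ 4 * d := by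
    have h341 := χ.norm_LSeries_product_ge_one hη0 0
    simp only [Complex.ofReal_zero, mul_zero, add_zero] at h341
    rw [← Complex.ofReal_one, ← Complex.ofReal_add, norm_mul, norm_mul, norm_pow, norm_pow] at h341
    refine h341.trans ?_
    have hone := norm_LSeries_le_one_add_one_div (1 : DirichletCharacter ℂ d) hη0
    have hinv : 1 ≤ 1 / η := (one_le_div hη0).mpr hη1
    gcongr
    · linarith [(by ring : 2 / η = 1 / η + 1 / η)]
    · exact norm_LSeries_dirichletCharacter_le hχ2 (by linarith)
  have hA : 28 * d * η ≤ A := by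
    by_contra! hlt
    have hpow : A ^ 4 < (28 * d * η) ^ 4 := pow_lt_pow_left₀ hlt (norm_nonneg _) (by norm_num)
    have : (2 / η) ^ 3 * A ^ 4 * d < (2 / η) ^ 3 * (28 * d * η) ^ 4 * d := by gcongr
    have : (2 / η) ^ 3 * (28 * d * η) ^ 4 * d = 4917248 * (d ^ 5 * η) := by field_simp; ring
    have : 2 * 10 ^ 7 * (d ^ 5 * η) = 1 := by rw [hη]; field_simp
    linarith
  have hlip : A - ‖LSeries (fun n ↦ χ n) (1 + δ : ℝ)‖ ≤ 18 * d * (η - δ) := by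
    have := norm_LSeries_dirichletCharacter_sub_le hχ (by linarith : 1 < 1 + δ)
      (by linarith : 1 + δ ≤ 1 + η) (by linarith)
    rw [norm_sub_rev, add_sub_add_left_eq_sub] at this
    exact (norm_sub_norm_le _ _).trans this
  have hgoal : 1 / (2 * 10 ^ 6 * (d : ℝ) ^ 4) = 10 * d * η := by rw [hη]; field_simp
  rw [hgoal]
  nlinarith [mul_nonneg (by linarith : (0 : ℝ) ≤ d) hδ.le]

theorem one_div_le_norm_LSeries (hχ : χ ≠ 1) (hδ : 0 < δ) (hδd : δ * (2 * 10 ^ 7 * d ^ 5) ≤ 1) :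
    1 / (2 * 10 ^ 6 * d ^ 4) ≤ ‖LSeries (fun n ↦ χ n) (1 + δ : ℝ)‖ := by
  by_cases hχ2 : χ ^ 2 = 1
  · have hd : (1 : ℝ) ≤ d := by exact_mod_cast NeZero.pos d
    refine le_trans ?_ (one_div_le_norm_LSeries_of_sq_eq_one hχ hχ2 (by linarith : 1 < 1 + δ) ?_)
    · gcongr
      · norm_num
      · exact le_self_pow₀ hd (by norm_num)
    · refine le_trans ?_ hδd
      rw [add_sub_cancel_left]
      gcongr
      · norm_num
      · norm_num
  · exact one_div_le_norm_LSeries_of_sq_ne_one hχ hχ2 hδ hδd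

theorem abs_log_norm_LSeries_le (hχ : χ ≠ 1) (hδ : 0 < δ) (hδd : δ * (2 * 10 ^ 7 * d ^ 5) ≤ 1) :
    |Real.log ‖LSeries (fun n ↦ χ n) (1 + δ : ℝ)‖| ≤ Real.log (2 * 10 ^ 6) + 4 * Real.log d := by
  have hd : (1 : ℝ) ≤ d := by exact_mod_cast NeZero.pos d
  have hlower := one_div_le_norm_LSeries hχ hδ hδd
  have hpos : 0 < 1 / (2 * 10 ^ 6 * (d : ℝ) ^ 4) := by positivity
  have hlog_lower := Real.log_le_log hpos hlower
  have hlog_upper := Real.log_le_log (hpos.trans_le hlower)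
    (norm_LSeries_dirichletCharacter_le hχ (by linarith : 1 < 1 + δ))
  rw [one_div, Real.log_inv, Real.log_mul (by positivity) (by positivity), Real.log_pow,
    Nat.cast_ofNat] at hlog_lower
  have := Real.log_nonneg (by norm_num : (1 : ℝ) ≤ 2 * 10 ^ 6)
  have := Real.log_nonneg hd
  rw [abs_le]
  constructor <;> linarith

end LSeriesLowerBound

section PrimeSums

theorem norm_neg_log_one_sub_sub_self_le {z : ℂ} (hz : ‖z‖ ≤ 1 / 2) :
    ‖-Complex.log (1 - z) - z‖ ≤ ‖z‖ ^ 2 := by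
  have h := Complex.norm_log_one_add_sub_self_le (z := -z) (by rw [norm_neg]; linarith)
  rw [norm_neg, ← norm_neg, ← sub_eq_add_neg, sub_neg_eq_add, neg_add'] at h
  have hinv : (1 - ‖z‖)⁻¹ ≤ 2 := inv_le_of_inv_le₀ two_pos (by linarith)
  nlinarith [sq_nonneg ‖z‖]

theorem tsum_primes_rpow_neg_two_le_one : ∑' p : Nat.Primes, (p : ℝ) ^ (-2 : ℝ) ≤ 1 := by
  have hinj : Function.Injective fun p : Nat.Primes ↦ (p : ℕ) - 2 := fun p q hpq ↦ by
    have := p.prop.two_le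
    have := q.prop.two_le
    exact Subtype.ext (by simp only at hpq; lia)
  have hsummable := summable_add_natCast_rpow_neg (zero_lt_two (α := ℝ)) one_pos
  have hcast (p : Nat.Primes) : (2 + ((p - 2 : ℕ) : ℝ)) = p := by
    rw [Nat.cast_sub p.prop.two_le, Nat.cast_ofNat, add_sub_cancel]
  calc ∑' p : Nat.Primes, (p : ℝ) ^ (-2 : ℝ)
      = ∑' p : Nat.Primes, (2 + ((p - 2 : ℕ) : ℝ)) ^ (-(1 + 1 : ℝ)) := by
        simp only [hcast]; norm_num
    _ ≤ ∑' i : ℕ, (2 + i : ℝ) ^ (-(1 + 1 : ℝ)) :=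
        tsum_comp_le_tsum_of_inj hsummable (fun i ↦ by positivity) hinj
    _ = ∑' i : ℕ, (1 + i + 1 : ℝ) ^ (-(1 + 1 : ℝ)) :=
        tsum_congr fun i ↦ by congr 1; ring
    _ ≤ 1 := by simpa using tsum_add_natCast_add_one_rpow_neg_le (one_pos (α := ℝ)) one_pos

/-- The sum `∑ Re χ(p) p ^ (-σ)` over the primes `p`, which approximates `log |L(σ, χ)|`. -/
noncomputable def rePrimeSum {d : ℕ} (χ : DirichletCharacter ℂ d) (σ : ℝ) : ℝ :=
  ∑' p : Nat.Primes, (χ p).re * (p : ℝ) ^ (-σ)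

variable {d : ℕ} {σ δ : ℝ}

theorem abs_re_dirichletCharacter_le_one (χ : DirichletCharacter ℂ d) (a : ZMod d) :
    |(χ a).re| ≤ 1 :=
  (Complex.abs_re_le_norm _).trans (χ.norm_le_one _)

theorem summable_rePrimeSum (χ : DirichletCharacter ℂ d) (hσ : 1 < σ) :
    Summable fun p : Nat.Primes ↦ (χ p).re * (p : ℝ) ^ (-σ) := by
  have hprimes : Summable fun p : Nat.Primes ↦ (p : ℝ) ^ (-σ) :=
    Nat.Primes.summable_rpow.mpr (by linarith)
  refine .of_norm_bounded hprimes fun p ↦ ?_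
  rw [norm_mul, Real.norm_of_nonneg (by positivity : (0 : ℝ) ≤ (p : ℝ) ^ (-σ))]
  exact mul_le_of_le_one_left (by positivity) (abs_re_dirichletCharacter_le_one χ p)

theorem abs_re_neg_log_one_sub_sub_le (χ : DirichletCharacter ℂ d) (hσ : 1 ≤ σ)
    (p : Nat.Primes) :
    |(-Complex.log (1 - χ p * (p : ℂ) ^ (-(σ : ℂ)))).re - (χ p).re * (p : ℝ) ^ (-σ)|
      ≤ (p : ℝ) ^ (-2 : ℝ) := by
  have hp2 : (2 : ℝ) ≤ p := by exact_mod_cast p.prop.two_le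
  have hpow : (p : ℂ) ^ (-(σ : ℂ)) = ((p : ℝ) ^ (-σ) : ℝ) := by
    rw [Complex.ofReal_cpow (by positivity)]
    push_cast
    rfl
  have hnorm : ‖χ p * (((p : ℝ) ^ (-σ) : ℝ) : ℂ)‖ ≤ (p : ℝ)⁻¹ := by
    rw [norm_mul, Complex.norm_of_nonneg (by positivity), ← Real.rpow_neg_one]
    refine (mul_le_of_le_one_left (by positivity) (χ.norm_le_one _)).trans ?_
    exact Real.rpow_le_rpow_of_exponent_le (by linarith) (by linarith)
  have hhalf : (p : ℝ)⁻¹ ≤ 1 / 2 := by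
    rw [one_div]
    exact inv_anti₀ two_pos hp2
  rw [hpow, ← Complex.re_mul_ofReal, ← Complex.sub_re]
  refine (Complex.abs_re_le_norm _).trans
    ((norm_neg_log_one_sub_sub_self_le (hnorm.trans hhalf)).trans ?_)
  have hsq : (p : ℝ) ^ (-2 : ℝ) = (p : ℝ)⁻¹ ^ 2 := by
    rw [Real.rpow_neg p.val.cast_nonneg, Real.rpow_two, inv_pow]
  rw [hsq]
  gcongr

theorem abs_log_norm_LSeries_sub_rePrimeSum_le [NeZero d] (χ : DirichletCharacter ℂ d)
    (hσ : 1 < σ) : |Real.log ‖LSeries (fun n ↦ χ n) σ‖ - rePrimeSum χ σ| ≤ 1 := by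
  have hre : 1 < (σ : ℂ).re := by simpa using hσ
  have hlog := DirichletCharacter.summable_neg_log_one_sub_mul_prime_cpow χ hre
  rw [← DirichletCharacter.LSeries_eulerProduct_exp_log χ hre, Complex.norm_exp, Real.log_exp,
    Complex.re_tsum hlog, rePrimeSum,
    ← (Complex.hasSum_re hlog.hasSum).summable.tsum_sub (summable_rePrimeSum χ hσ)]
  have hsquares : Summable fun p : Nat.Primes ↦ (p : ℝ) ^ (-2 : ℝ) :=
    Nat.Primes.summable_rpow.mpr (by norm_num)
  rw [← Real.norm_eq_abs]
  exact (tsum_of_norm_bounded hsquares.hasSum fun p ↦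
    abs_re_neg_log_one_sub_sub_le χ hσ.le p).trans tsum_primes_rpow_neg_two_le_one

variable [NeZero d]

theorem abs_rePrimeSum_le {χ : DirichletCharacter ℂ d} (hχ : χ ≠ 1) (hδ : 0 < δ)
    (hδd : δ * (2 * 10 ^ 7 * d ^ 5) ≤ 1) :
    |rePrimeSum χ (1 + δ)| ≤ Real.log (2 * 10 ^ 6) + 1 + 4 * Real.log d := by
  have hlog := abs_log_norm_LSeries_le hχ hδ hδd
  have hdiff := abs_log_norm_LSeries_sub_rePrimeSum_le χ (by linarith : 1 < 1 + δ)
  rw [abs_le] at *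
  constructor <;> linarith

theorem le_rePrimeSum_one (hδ : 0 < δ) (hδ1 : δ ≤ 1) :
    Real.log δ⁻¹ - 2 * Real.log d - 1
      ≤ rePrimeSum (1 : DirichletCharacter ℂ d) (1 + δ) := by
  have hd : (0 : ℝ) < d := by exact_mod_cast NeZero.pos d
  have hlog := Real.log_le_log (by positivity) (one_div_le_norm_LSeries_one (d := d) hδ hδ1)
  rw [one_div, Real.log_inv, Real.log_mul (by positivity) hδ.ne', Real.log_pow,
    Nat.cast_ofNat] at hlog
  have hdiff := abs_log_norm_LSeries_sub_rePrimeSum_le (1 : DirichletCharacter ℂ d)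
    (by linarith : 1 < 1 + δ)
  rw [Real.log_inv]
  linarith [(abs_le.mp hdiff).2]

theorem le_sum_re_mul_rePrimeSum {a : ZMod d} (ha : IsUnit a) (hδ : 0 < δ) (hδ1 : δ ≤ 1)
    (hδd : δ * (2 * 10 ^ 7 * d ^ 5) ≤ 1) :
    Real.log δ⁻¹ - 2 * Real.log d - 1
        - (d.totient - 1) * (Real.log (2 * 10 ^ 6) + 1 + 4 * Real.log d)
      ≤ ∑ χ : DirichletCharacter ℂ d, (χ a).re * rePrimeSum χ (1 + δ) := by
  have htrivial : Real.log δ⁻¹ - 2 * Real.log d - 1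
      ≤ ((1 : DirichletCharacter ℂ d) a).re * rePrimeSum (1 : DirichletCharacter ℂ d) (1 + δ) := by
    rw [MulChar.one_apply ha, Complex.one_re, one_mul]
    exact le_rePrimeSum_one hδ hδ1
  have hnontrivial : ∀ χ ∈ (univ : Finset (DirichletCharacter ℂ d)).erase 1,
      -(Real.log (2 * 10 ^ 6) + 1 + 4 * Real.log d) ≤ (χ a).re * rePrimeSum χ (1 + δ) :=
    fun χ hχ ↦ by
      refine (abs_le.mp ?_).1
      rw [abs_mul]
      exact (mul_le_of_le_one_left (abs_nonneg _) (abs_re_dirichletCharacter_le_one χ a)).trans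
        (abs_rePrimeSum_le (ne_of_mem_erase hχ) hδ hδd)
  have hcard : #((univ : Finset (DirichletCharacter ℂ d)).erase 1) = d.totient - 1 := by
    rw [card_erase_of_mem (mem_univ _), card_univ, ← Nat.card_eq_fintype_card,
      DirichletCharacter.card_eq_totient_of_hasEnoughRootsOfUnity ℂ d]
  have hsum := sum_le_sum hnontrivial
  rw [sum_const, hcard, nsmul_eq_mul, Nat.cast_sub (Nat.totient_pos.mpr (NeZero.pos d)),
    Nat.cast_one] at hsum
  rw [← add_sum_erase _ _ (mem_univ 1)]
  refine (le_of_eq ?_).trans (add_le_add htrivial hsum)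
  ring

/- Since `a⁻¹ = a`, every `χ a` is `1` or `-1`, so that `Re χ(a) Re χ(n) = Re χ(a⁻¹ n)`. -/
theorem sum_re_mul_re_of_mul_self_eq_one {a : ZMod d} (ha : a * a = 1) (n : ZMod d) :
    ∑ χ : DirichletCharacter ℂ d, (χ a).re * (χ n).re = if n = a then (d.totient : ℝ) else 0 := by
  have hmul (χ : DirichletCharacter ℂ d) : (χ a).re * (χ n).re = (χ (a * n)).re := by
    have hχa : χ a * χ a = 1 := by rw [← map_mul, ha, map_one]
    rcases mul_self_eq_one_iff.mp hχa with h | h <;> simp [h]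
  have hiff : a * n = 1 ↔ n = a :=
    ⟨fun h ↦ by rw [← one_mul n, ← ha, mul_assoc, h, mul_one], fun h ↦ h ▸ ha⟩
  rw [sum_congr rfl fun χ _ ↦ hmul χ, ← Complex.re_sum, DirichletCharacter.sum_characters_eq]
  simp only [hiff]
  split_ifs <;> simp

theorem sum_re_mul_rePrimeSum {a : ZMod d} (ha : a * a = 1) (hσ : 1 < σ) :
    ∑ χ : DirichletCharacter ℂ d, (χ a).re * rePrimeSum χ σ
      = d.totient * ∑' p : Nat.Primes, if (p : ZMod d) = a then (p : ℝ) ^ (-σ) else 0 := by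
  simp only [rePrimeSum, ← tsum_mul_left]
  rw [← Summable.tsum_finsetSum fun χ _ ↦ (summable_rePrimeSum χ hσ).mul_left _]
  refine tsum_congr fun p ↦ ?_
  simp only [← mul_assoc]
  rw [← sum_mul, sum_re_mul_re_of_mul_self_eq_one ha]
  split_ifs <;> simp

theorem le_tsum_primes_of_mul_self_eq_one {a : ZMod d} (ha : a * a = 1) (hδ : 0 < δ)
    (hδd : δ * (2 * 10 ^ 7 * d ^ 5) ≤ 1) :
    Real.log δ⁻¹ / d - (Real.log (2 * 10 ^ 6) + 1) - 6 * Real.log d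
      ≤ ∑' p : Nat.Primes, if (p : ZMod d) = a then (p : ℝ) ^ (-(1 + δ)) else 0 := by
  have hd : (1 : ℝ) ≤ d := by exact_mod_cast NeZero.pos d
  have hδ1 : δ ≤ 1 := by nlinarith [one_le_pow₀ hd (n := 5)]
  have htotal := le_sum_re_mul_rePrimeSum (IsUnit.of_mul_eq_one a ha) hδ hδ1 hδd
  rw [sum_re_mul_rePrimeSum ha (by linarith)] at htotal
  have hlogδ : 0 ≤ Real.log δ⁻¹ := Real.log_nonneg ((one_le_inv₀ hδ).mpr hδ1)
  have hlogd : 0 ≤ Real.log d := Real.log_nonneg hd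
  have hlog : 0 ≤ Real.log (2 * 10 ^ 6) := Real.log_nonneg (by norm_num)
  have hφ : (1 : ℝ) ≤ d.totient := by exact_mod_cast Nat.totient_pos.mpr (NeZero.pos d)
  set P := ∑' p : Nat.Primes, if (p : ZMod d) = a then (p : ℝ) ^ (-(1 + δ)) else 0
  have hdiv : Real.log δ⁻¹ / d ≤ Real.log δ⁻¹ / d.totient := by
    gcongr
    exact_mod_cast Nat.totient_le d
  have hbound : Real.log δ⁻¹ / d.totient
      ≤ P + (Real.log (2 * 10 ^ 6) + 1 + 4 * Real.log d) + 2 * Real.log d := by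
    rw [div_le_iff₀ (by linarith)]
    generalize Real.log (2 * 10 ^ 6) = K at *
    linarith [le_mul_of_one_le_left hlogd hφ]
  linarith

end PrimeSums

section SievingPrimes

theorem sum_Ioc_zero_inv_le (W : ℕ) : ∑ n ∈ Ioc 0 W, (n : ℝ)⁻¹ ≤ 1 + Real.log W := by
  have h := harmonic_le_one_add_log W
  rw [harmonic_eq_sum_Icc] at h
  push_cast at h
  exact h

theorem summable_indicator_rpow_neg (s : Set ℕ) {δ : ℝ} (hδ : 0 < δ) :
    Summable (s.indicator fun n : ℕ ↦ (n : ℝ) ^ (-(1 + δ))) :=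
  (Real.summable_nat_rpow.mpr (by linarith)).indicator s

theorem indicator_rpow_neg_le_indicator_inv (s : Set ℕ) {δ : ℝ} (hδ : 0 ≤ δ) (n : ℕ) :
    s.indicator (fun n : ℕ ↦ (n : ℝ) ^ (-(1 + δ))) n ≤ s.indicator (fun n : ℕ ↦ (n : ℝ)⁻¹) n := by
  refine Set.indicator_le_indicator ?_
  rcases n.eq_zero_or_pos with rfl | hn
  · rw [Nat.cast_zero, Real.zero_rpow (by linarith), inv_zero]
  · rw [← Real.rpow_neg_one]
    exact Real.rpow_le_rpow_of_exponent_le (by exact_mod_cast hn) (by linarith)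

theorem sum_range_indicator_inv_le (s : Set ℕ) (W Z : ℕ) :
    ∑ n ∈ range (Z + 1), s.indicator (fun n : ℕ ↦ (n : ℝ)⁻¹) n
      ≤ ∑ n ∈ Ioc W Z with n ∈ s, (n : ℝ)⁻¹ + (1 + Real.log W) := by
  have hnonneg (n : ℕ) : 0 ≤ s.indicator (fun n : ℕ ↦ (n : ℝ)⁻¹) n :=
    Set.indicator_nonneg (fun _ _ ↦ by positivity) n
  have hsubset : Ioc 0 Z ⊆ Ioc W Z ∪ Ioc 0 W := by
    intro n
    simp only [mem_union, mem_Ioc]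
    omega
  have hhead : ∑ n ∈ Ioc 0 W, s.indicator (fun n : ℕ ↦ (n : ℝ)⁻¹) n ≤ 1 + Real.log W :=
    (sum_le_sum fun n _ ↦ Set.indicator_le_self' (fun _ _ ↦ by positivity) n).trans
      (sum_Ioc_zero_inv_le W)
  calc ∑ n ∈ range (Z + 1), s.indicator (fun n : ℕ ↦ (n : ℝ)⁻¹) n
      = ∑ n ∈ Ioc 0 Z, s.indicator (fun n : ℕ ↦ (n : ℝ)⁻¹) n := by
        rw [sum_range_eq_add_Ico _ (by omega), Set.indicator_apply, Nat.cast_zero, inv_zero,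
          ite_self, zero_add]
        rfl
    _ ≤ ∑ n ∈ Ioc W Z ∪ Ioc 0 W, s.indicator (fun n : ℕ ↦ (n : ℝ)⁻¹) n :=
        sum_le_sum_of_subset_of_nonneg hsubset fun n _ _ ↦ hnonneg n
    _ = ∑ n ∈ Ioc W Z with n ∈ s, (n : ℝ)⁻¹
          + ∑ n ∈ Ioc 0 W, s.indicator (fun n : ℕ ↦ (n : ℝ)⁻¹) n := by
        rw [sum_union (Ioc_disjoint_Ioc_of_le le_rfl).symm, sum_filter]
        simp only [Set.indicator_apply]
    _ ≤ ∑ n ∈ Ioc W Z with n ∈ s, (n : ℝ)⁻¹ + (1 + Real.log W) := by gcongr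

theorem tsum_indicator_rpow_neg_le (s : Set ℕ) (W : ℕ) {Z : ℕ} (hZ : 0 < Z) {δ : ℝ} (hδ : 0 < δ) :
    ∑' n, s.indicator (fun n : ℕ ↦ (n : ℝ) ^ (-(1 + δ))) n
      ≤ ∑ n ∈ Ioc W Z with n ∈ s, (n : ℝ)⁻¹ + (1 + Real.log W) + (Z : ℝ) ^ (-δ) / δ := by
  have hsummable := summable_indicator_rpow_neg s hδ
  have htail : ∑' i, s.indicator (fun n : ℕ ↦ (n : ℝ) ^ (-(1 + δ))) (i + (Z + 1))
      ≤ ∑' i : ℕ, ((Z : ℝ) + i + 1) ^ (-(1 + δ)) := by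
    have hcast (i : ℕ) : ((i + (Z + 1) : ℕ) : ℝ) = Z + i + 1 := by push_cast; ring
    refine Summable.tsum_le_tsum (fun i ↦ ?_) ((summable_nat_add_iff (Z + 1)).mpr hsummable) ?_
    · rw [← hcast]
      exact Set.indicator_le_self' (fun _ _ ↦ by positivity) _
    · simp only [← hcast]
      exact (summable_nat_add_iff (f := fun n : ℕ ↦ (n : ℝ) ^ (-(1 + δ))) (Z + 1)).mpr
        (Real.summable_nat_rpow.mpr (by linarith))
  rw [← hsummable.sum_add_tsum_nat_add (Z + 1)]
  exact add_le_add ((sum_le_sum fun n _ ↦ indicator_rpow_neg_le_indicator_inv s hδ.le n).trans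
    (sum_range_indicator_inv_le s W Z))
    (htail.trans (tsum_add_natCast_add_one_rpow_neg_le (by exact_mod_cast hZ) hδ))

theorem le_sum_primes_dvd_add_one_inv {d : ℕ} (hd : 0 < d) (W : ℕ) {Z : ℕ} (hZ : 0 < Z) {δ : ℝ}
    (hδ : 0 < δ) (hδd : δ * (2 * 10 ^ 7 * d ^ 5) ≤ 1) :
    Real.log δ⁻¹ / d - (Real.log (2 * 10 ^ 6) + 1) - 6 * Real.log d
        - (1 + Real.log W) - (Z : ℝ) ^ (-δ) / δ
      ≤ ∑ p ∈ Ioc W Z with p.Prime ∧ d ∣ p + 1, (p : ℝ)⁻¹ := by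
  have : NeZero d := ⟨hd.ne'⟩
  have hcongr (p : ℕ) : (p : ZMod d) = -1 ↔ d ∣ p + 1 := by
    rw [← ZMod.natCast_eq_zero_iff, Nat.cast_add_one, eq_neg_iff_add_eq_zero]
  have htsum : ∑' p : Nat.Primes, (if (p : ZMod d) = -1 then (p : ℝ) ^ (-(1 + δ)) else 0)
      = ∑' n, {p : ℕ | p.Prime ∧ d ∣ p + 1}.indicator (fun n : ℕ ↦ (n : ℝ) ^ (-(1 + δ))) n := by
    rw [← Nat.Primes.coe_nat_injective.tsum_eq fun n hn ↦
      ⟨⟨n, (Set.mem_of_indicator_ne_zero hn).1⟩, rfl⟩]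
    exact tsum_congr fun p ↦ by simp [hcongr, Set.indicator_apply, p.2]
  have hle := le_tsum_primes_of_mul_self_eq_one (neg_mul_neg (1 : ZMod d) 1 |>.trans (mul_one 1))
    hδ hδd
  rw [htsum] at hle
  have htrunc := tsum_indicator_rpow_neg_le {p : ℕ | p.Prime ∧ d ∣ p + 1} W hZ hδ
  simp only [Set.mem_ofPred_eq] at htrunc
  linarith

/-- The primes `p ≡ -1 (mod d)` with `⌊y⌋ < p ≤ ⌈exp (exp (y / 2))⌉`. If one of them divides `n`
exactly once, then `d ∣ σ(n)`. In the application `y = log (log x)`, so that the largest of these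
primes has about the square root of `log x` as its logarithm. -/
noncomputable def sievingPrimes (d : ℕ) (y : ℝ) : Finset ℕ :=
  {p ∈ Ioc ⌊y⌋₊ ⌈Real.exp (Real.exp (y / 2))⌉₊ | p.Prime ∧ d ∣ p + 1}

theorem prime_of_mem_sievingPrimes {d p : ℕ} {y : ℝ} (hp : p ∈ sievingPrimes d y) : p.Prime :=
  (mem_filter.mp hp).2.1

theorem card_sievingPrimes_le (d : ℕ) (y : ℝ) :
    #(sievingPrimes d y) ≤ ⌈Real.exp (Real.exp (y / 2))⌉₊ :=
  (card_filter_le _ _).trans (by rw [Nat.card_Ioc]; exact Nat.sub_le _ _)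

theorem ceil_exp_exp_rpow_neg_exp_div_le_one (y : ℝ) :
    (⌈Real.exp (Real.exp (y / 2))⌉₊ : ℝ) ^ (-Real.exp (-(y / 4))) / Real.exp (-(y / 4)) ≤ 1 := by
  rw [div_le_one (Real.exp_pos _)]
  calc (⌈Real.exp (Real.exp (y / 2))⌉₊ : ℝ) ^ (-Real.exp (-(y / 4)))
      ≤ Real.exp (Real.exp (y / 2)) ^ (-Real.exp (-(y / 4))) :=
        Real.rpow_le_rpow_of_nonpos (Real.exp_pos _) (Nat.le_ceil _)
          (neg_nonpos.mpr (Real.exp_pos _).le)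
    _ = Real.exp (-Real.exp (y / 4)) := by
        rw [← Real.exp_mul, mul_neg, ← Real.exp_add]
        ring_nf
    _ ≤ Real.exp (-(y / 4)) := by
        gcongr
        linarith [Real.add_one_le_exp (y / 4)]

theorem rpow_half_mul_rpow_half_le_div {d : ℕ} (hd : 0 < d) {y ε : ℝ} (hy : 0 < y)
    (hdy : (d : ℝ) ≤ y ^ (1 - ε)) : y ^ (ε / 2) * y ^ (ε / 2) ≤ y / d := by
  rw [le_div_iff₀ (by exact_mod_cast hd), ← Real.rpow_add hy, add_halves]
  calc y ^ ε * d ≤ y ^ ε * y ^ (1 - ε) := by gcongr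
    _ = y := by rw [← Real.rpow_add hy, add_sub_cancel, Real.rpow_one]

theorem le_sum_sievingPrimes_inv {d : ℕ} (hd : 0 < d) {y : ℝ} (hdy : (d : ℝ) ≤ y)
    (hy : Real.exp (-(y / 4)) * (2 * 10 ^ 7 * y ^ 5) ≤ 1) :
    y / d / 4 - Real.log (2 * 10 ^ 6) - 7 * Real.log y - 3
      ≤ ∑ p ∈ sievingPrimes d y, (p : ℝ)⁻¹ := by
  have hd1 : (1 : ℝ) ≤ d := by exact_mod_cast hd
  have hδd : Real.exp (-(y / 4)) * (2 * 10 ^ 7 * d ^ 5) ≤ 1 := le_trans (by gcongr) hy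
  have hlogd : Real.log d ≤ Real.log y := Real.log_le_log (by linarith) hdy
  have hlogfloor : Real.log ⌊y⌋₊ ≤ Real.log y :=
    Real.log_le_log (by exact_mod_cast Nat.floor_pos.mpr (hd1.trans hdy))
      (Nat.floor_le (by linarith))
  have hle := le_sum_primes_dvd_add_one_inv hd ⌊y⌋₊
    (Nat.ceil_pos.mpr (Real.exp_pos (Real.exp (y / 2)))) (Real.exp_pos _) hδd
  have htail := ceil_exp_exp_rpow_neg_exp_div_le_one y
  rw [← Real.exp_neg, neg_neg, Real.log_exp, div_right_comm] at hle
  unfold sievingPrimes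
  linarith

theorem eventually_exp_neg_mul_pow_le_one (K : ℝ) (k : ℕ) :
    ∀ᶠ y : ℝ in atTop, Real.exp (-(y / 4)) * (K * y ^ k) ≤ 1 := by
  have h := (((Real.tendsto_pow_mul_exp_neg_atTop_nhds_zero k).comp
    (tendsto_id.atTop_div_const four_pos)).const_mul (K * 4 ^ k)).eventually_le_const
    (by rw [mul_zero]; exact one_pos)
  filter_upwards [h] with y hy
  refine le_of_eq_of_le ?_ hy
  simp only [Function.comp, id, div_pow]
  field_simp

theorem eventually_rpow_le_sum_sievingPrimes_inv {ε : ℝ} (hε : 0 < ε) :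
    ∀ᶠ y : ℝ in atTop, ∀ d : ℕ, 0 < d → (d : ℝ) ≤ y ^ (1 - ε) →
      y ^ (ε / 2) ≤ ∑ p ∈ sievingPrimes d y, (p : ℝ)⁻¹ := by
  have hlog := (isLittleO_log_rpow_atTop (half_pos hε)).bound one_pos
  have hpow := (tendsto_rpow_atTop (half_pos hε)).eventually_ge_atTop
    (44 + 4 * Real.log (2 * 10 ^ 6))
  filter_upwards [hlog, hpow, eventually_exp_neg_mul_pow_le_one (2 * 10 ^ 7) 5,
    eventually_ge_atTop 1] with y hlogy hpowy hexp hy d hd hdy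
  have hy0 : 0 < y := one_pos.trans_le hy
  rw [one_mul, Real.norm_of_nonneg (Real.log_nonneg hy),
    Real.norm_of_nonneg (by positivity)] at hlogy
  have hdy' : (d : ℝ) ≤ y :=
    hdy.trans (Real.rpow_le_self_of_one_le hy (by linarith))
  have hle := le_sum_sievingPrimes_inv hd hdy' hexp
  have hsq := rpow_half_mul_rpow_half_le_div hd hy0 hdy
  have hK : 0 ≤ Real.log (2 * 10 ^ 6) := Real.log_nonneg (by norm_num)
  generalize Real.log (2 * 10 ^ 6) = K at *
  nlinarith

end SievingPrimes

section BrunSieve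

variable {ι : Type*}

theorem sum_powerset_card_le_neg_one_pow (s : Finset ι) (m : ℕ) :
    ∑ t ∈ s.powerset with #t ≤ m, (-1 : ℤ) ^ #t
      = ∑ j ∈ range (m + 1), (-1 : ℤ) ^ j * (#s).choose j := by
  have hmaps : ∀ t ∈ {t ∈ s.powerset | #t ≤ m}, #t ∈ range (m + 1) := fun t ht ↦
    mem_range_succ_iff.mpr (mem_filter.mp ht).2
  rw [← sum_fiberwise_of_maps_to hmaps]
  refine sum_congr rfl fun j hj ↦ ?_
  have hfiber : {t ∈ {t ∈ s.powerset | #t ≤ m} | #t = j} = s.powersetCard j := by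
    ext t
    simp only [mem_filter, mem_powerset, mem_powersetCard, mem_range] at hj ⊢
    grind
  rw [hfiber, sum_congr rfl fun t ht ↦ by rw [(mem_powersetCard.mp ht).2], sum_const,
    card_powersetCard, nsmul_eq_mul, mul_comm]

theorem ite_eq_empty_le_sum_powerset_card_le [DecidableEq ι] (s : Finset ι) (k : ℕ) :
    (if s = ∅ then (1 : ℤ) else 0) ≤ ∑ t ∈ s.powerset with #t ≤ 2 * k, (-1 : ℤ) ^ #t := by
  rw [sum_powerset_card_le_neg_one_pow]
  rcases s.eq_empty_or_nonempty with rfl | hs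
  · rw [if_pos rfl, card_empty, sum_range_succ']
    simp
  · obtain ⟨c, hc⟩ := Nat.exists_eq_add_one.mpr hs.card_pos
    rw [if_neg hs.ne_empty, hc, Int.alternating_sum_range_choose_eq_choose, pow_mul]
    simp

theorem powerset_filter_dvd_eq {P : Finset ℕ} (hP : ∀ p ∈ P, p.Prime) (n : ℕ) :
    {p ∈ P | p ∣ n}.powerset = {T ∈ P.powerset | (∏ p ∈ T, p) ∣ n} := by
  ext T
  simp only [mem_powerset, mem_filter, subset_iff]
  refine ⟨fun h ↦ ⟨fun p hp ↦ (h hp).1, ?_⟩, fun h p hp ↦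
    ⟨h.1 hp, (dvd_prod_of_mem _ hp).trans h.2⟩⟩
  exact prod_primes_dvd n (fun p hp ↦ (hP p (h hp).1).prime) fun p hp ↦ (h hp).2

theorem card_forall_not_dvd_le {P : Finset ℕ} (hP : ∀ p ∈ P, p.Prime) (N k : ℕ) :
    (#{n ∈ Icc 1 N | ∀ p ∈ P, ¬p ∣ n} : ℤ)
      ≤ ∑ T ∈ P.powerset with #T ≤ 2 * k, (-1 : ℤ) ^ #T * (N / (∏ p ∈ T, p) : ℕ) := by
  calc (#{n ∈ Icc 1 N | ∀ p ∈ P, ¬p ∣ n} : ℤ)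
      = ∑ n ∈ Icc 1 N, if {p ∈ P | p ∣ n} = ∅ then (1 : ℤ) else 0 := by
        simp only [filter_eq_empty_iff, sum_boole]
    _ ≤ ∑ n ∈ Icc 1 N, ∑ T ∈ {p ∈ P | p ∣ n}.powerset with #T ≤ 2 * k, (-1 : ℤ) ^ #T :=
        sum_le_sum fun n _ ↦ ite_eq_empty_le_sum_powerset_card_le {p ∈ P | p ∣ n} k
    _ = ∑ T ∈ P.powerset with #T ≤ 2 * k, ∑ n ∈ Icc 1 N with (∏ p ∈ T, p) ∣ n, (-1 : ℤ) ^ #T := by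
        refine sum_comm' fun n T ↦ ?_
        rw [powerset_filter_dvd_eq hP]
        simp only [mem_filter]
        tauto
    _ = ∑ T ∈ P.powerset with #T ≤ 2 * k, (-1 : ℤ) ^ #T * (N / (∏ p ∈ T, p) : ℕ) := by
        refine sum_congr rfl fun T _ ↦ ?_
        rw [sum_const, nsmul_eq_mul, mul_comm, ← Nat.Ioc_filter_dvd_card_eq_div]
        rfl

theorem neg_one_pow_mul_natCast_div_le (j N : ℕ) {D : ℕ} (hD : 0 < D) :
    (-1 : ℝ) ^ j * (N / D : ℕ) ≤ (-1) ^ j * (N / D) + 1 := by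
  have hle : ((N / D : ℕ) : ℝ) ≤ N / D := Nat.cast_div_le
  have hlt : (N : ℝ) / D < (N / D : ℕ) + 1 := by
    rw [div_lt_iff₀ (by exact_mod_cast hD), mul_comm]
    exact_mod_cast Nat.lt_mul_div_succ N hD
  rcases neg_one_pow_eq_or ℝ j with h | h <;> rw [h] <;> linarith

theorem prod_one_sub_le_exp_neg_sum {s : Finset ι} {f : ι → ℝ} (hf : ∀ i ∈ s, f i ≤ 1) :
    ∏ i ∈ s, (1 - f i) ≤ Real.exp (-∑ i ∈ s, f i) := by
  rw [← sum_neg_distrib, Real.exp_sum]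
  exact prod_le_prod (fun i hi ↦ sub_nonneg.mpr (hf i hi)) fun i _ ↦ Real.one_sub_le_exp_neg _

/- Rankin's trick: each `∏ i ∈ t, f i` with `m < #t` is weighted by `exp (#t - m) ≥ 1`. -/
theorem sum_powerset_card_gt_prod_le {s : Finset ι} {f : ι → ℝ} (hf : ∀ i, 0 ≤ f i) (m : ℕ) :
    ∑ t ∈ s.powerset with ¬#t ≤ m, ∏ i ∈ t, f i ≤ Real.exp (Real.exp 1 * ∑ i ∈ s, f i - m) := by
  have hprod (t : Finset ι) : 0 ≤ ∏ i ∈ t, f i := prod_nonneg fun i _ ↦ hf i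
  calc ∑ t ∈ s.powerset with ¬#t ≤ m, ∏ i ∈ t, f i
      ≤ ∑ t ∈ s.powerset with ¬#t ≤ m, Real.exp (-m) * ∏ i ∈ t, (Real.exp 1 * f i) := by
        refine sum_le_sum fun t ht ↦ ?_
        rw [mem_filter, not_le] at ht
        rw [prod_mul_distrib, prod_const, ← Real.exp_nat_mul, mul_one, ← mul_assoc, ← Real.exp_add]
        refine le_mul_of_one_le_left (hprod t) (Real.one_le_exp ?_)
        rw [neg_add_eq_sub, sub_nonneg]
        exact_mod_cast ht.2.le
    _ ≤ ∑ t ∈ s.powerset, Real.exp (-m) * ∏ i ∈ t, (Real.exp 1 * f i) := by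
        refine sum_le_sum_of_subset_of_nonneg (filter_subset _ _) fun t _ _ ↦ ?_
        rw [prod_mul_distrib]
        have := hprod t
        positivity
    _ = Real.exp (-m) * ∏ i ∈ s, (1 + Real.exp 1 * f i) := by rw [← mul_sum, prod_one_add]
    _ ≤ Real.exp (-m) * Real.exp (∑ i ∈ s, Real.exp 1 * f i) := by
        gcongr
        exact Real.prod_one_add_le_exp_sum s fun i ↦ by have := hf i; positivity
    _ = Real.exp (Real.exp 1 * ∑ i ∈ s, f i - m) := by
        rw [← Real.exp_add, ← mul_sum, neg_add_eq_sub]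

theorem card_powerset_card_le_le {s : Finset ι} {R : ℝ} (hR : 1 ≤ R) (hs : (#s : ℝ) ≤ R) (m : ℕ) :
    (#{t ∈ s.powerset | #t ≤ m} : ℝ) ≤ Real.exp 1 * R ^ m := by
  have hR0 : 0 < R := one_pos.trans_le hR
  calc (#{t ∈ s.powerset | #t ≤ m} : ℝ)
      = ∑ t ∈ s.powerset with #t ≤ m, 1 := by simp
    _ ≤ ∑ t ∈ s.powerset with #t ≤ m, R ^ m * ∏ _i ∈ t, R⁻¹ := by
        refine sum_le_sum fun t ht ↦ ?_
        rw [prod_const, inv_pow, ← div_eq_mul_inv, one_le_div (by positivity)]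
        exact pow_le_pow_right₀ hR (mem_filter.mp ht).2
    _ ≤ ∑ t ∈ s.powerset, R ^ m * ∏ _i ∈ t, R⁻¹ :=
        sum_le_sum_of_subset_of_nonneg (filter_subset _ _) fun t _ _ ↦ by positivity
    _ = R ^ m * ∏ _i ∈ s, (1 + R⁻¹) := by rw [← mul_sum, prod_one_add]
    _ ≤ R ^ m * Real.exp (∑ _i ∈ s, R⁻¹) := by
        gcongr
        exact Real.prod_one_add_le_exp_sum s fun _ ↦ by positivity
    _ ≤ Real.exp 1 * R ^ m := by
        rw [mul_comm, sum_const, nsmul_eq_mul, ← div_eq_mul_inv]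
        gcongr
        exact div_le_one_of_le₀ hs hR0.le

theorem sum_powerset_card_le_neg_one_pow_mul_prod_le {s : Finset ι} {f : ι → ℝ}
    (hf0 : ∀ i, 0 ≤ f i) (hf1 : ∀ i ∈ s, f i ≤ 1) (m : ℕ) :
    ∑ t ∈ s.powerset with #t ≤ m, (-1) ^ #t * ∏ i ∈ t, f i
      ≤ Real.exp (-∑ i ∈ s, f i) + Real.exp (Real.exp 1 * ∑ i ∈ s, f i - m) := by
  have htotal : ∑ t ∈ s.powerset, (-1) ^ #t * ∏ i ∈ t, f i = ∏ i ∈ s, (1 - f i) := by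
    simp only [sub_eq_add_neg, prod_one_add, prod_neg]
  have htail : -∑ t ∈ s.powerset with ¬#t ≤ m, (-1) ^ #t * ∏ i ∈ t, f i
      ≤ ∑ t ∈ s.powerset with ¬#t ≤ m, ∏ i ∈ t, f i := by
    rw [← sum_neg_distrib]
    refine sum_le_sum fun t _ ↦ ?_
    have hprod : 0 ≤ ∏ i ∈ t, f i := prod_nonneg fun i _ ↦ hf0 i
    rcases neg_one_pow_eq_or ℝ #t with h | h <;> rw [h] <;> linarith
  rw [← sum_filter_add_sum_filter_not s.powerset (#· ≤ m)] at htotal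
  linarith [prod_one_sub_le_exp_neg_sum hf1, sum_powerset_card_gt_prod_le (s := s) hf0 m]

theorem card_forall_not_dvd_le_exp {P : Finset ℕ} (hP : ∀ p ∈ P, p.Prime) (N k : ℕ) {R : ℝ}
    (hR : 1 ≤ R) (hPR : (#P : ℝ) ≤ R) :
    (#{n ∈ Icc 1 N | ∀ p ∈ P, ¬p ∣ n} : ℝ)
      ≤ N * (Real.exp (-∑ p ∈ P, (p : ℝ)⁻¹)
          + Real.exp (Real.exp 1 * ∑ p ∈ P, (p : ℝ)⁻¹ - (2 * k : ℕ)))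
        + Real.exp 1 * R ^ (2 * k) := by
  have hterm : ∀ T ∈ {T ∈ P.powerset | #T ≤ 2 * k},
      (-1 : ℝ) ^ #T * (N / (∏ p ∈ T, p) : ℕ) ≤ N * ((-1) ^ #T * ∏ p ∈ T, (p : ℝ)⁻¹) + 1 := by
    intro T hT
    have hD : 0 < ∏ p ∈ T, p :=
      prod_pos fun p hp ↦ (hP p (mem_powerset.mp (mem_filter.mp hT).1 hp)).pos
    refine (neg_one_pow_mul_natCast_div_le #T N hD).trans_eq ?_
    rw [Nat.cast_prod, prod_inv_distrib]
    ring
  calc (#{n ∈ Icc 1 N | ∀ p ∈ P, ¬p ∣ n} : ℝ)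
      ≤ ∑ T ∈ P.powerset with #T ≤ 2 * k, (-1 : ℝ) ^ #T * (N / (∏ p ∈ T, p) : ℕ) := by
        have h := Int.cast_le (R := ℝ).mpr (card_forall_not_dvd_le hP N k)
        simpa only [Int.cast_sum, Int.cast_mul, Int.cast_pow, Int.cast_neg, Int.cast_one,
          Int.cast_natCast] using h
    _ ≤ ∑ T ∈ P.powerset with #T ≤ 2 * k, (N * ((-1) ^ #T * ∏ p ∈ T, (p : ℝ)⁻¹) + 1) :=
        sum_le_sum hterm
    _ = N * ∑ T ∈ P.powerset with #T ≤ 2 * k, (-1) ^ #T * ∏ p ∈ T, (p : ℝ)⁻¹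
          + #{T ∈ P.powerset | #T ≤ 2 * k} := by
        rw [sum_add_distrib, ← mul_sum, sum_const, nsmul_one]
    _ ≤ _ := by
        gcongr
        · exact sum_powerset_card_le_neg_one_pow_mul_prod_le (fun p ↦ by positivity)
            (fun p _ ↦ Nat.cast_inv_le_one p) (2 * k)
        · exact card_powerset_card_le_le hR hPR (2 * k)

theorem exists_subset_le_sum_le_add_one {s : Finset ι} {f : ι → ℝ} (hf : ∀ i ∈ s, f i ≤ 1)
    {A : ℝ} (hA : 0 ≤ A) (hs : A ≤ ∑ i ∈ s, f i) :
    ∃ t ⊆ s, A ≤ ∑ i ∈ t, f i ∧ ∑ i ∈ t, f i ≤ A + 1 := by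
  induction s using Finset.induction_on with
  | empty => exact ⟨∅, subset_rfl, hs, by rw [sum_empty]; linarith⟩
  | insert a s ha ih =>
    by_cases hsA : A ≤ ∑ i ∈ s, f i
    · obtain ⟨t, hts, ht⟩ := ih (fun i hi ↦ hf i (mem_insert_of_mem hi)) hsA
      exact ⟨t, hts.trans (subset_insert a s), ht⟩
    · refine ⟨insert a s, subset_rfl, hs, ?_⟩
      rw [sum_insert ha]
      linarith [hf a (mem_insert_self a s)]

/- The sieve is applied to a subset of `P` with reciprocal sum in `[A, A + 1]`, so that a number of
Bonferroni steps proportional to `A` suffices. -/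
theorem card_forall_not_dvd_le_of_le_sum_inv {P : Finset ℕ} (hP : ∀ p ∈ P, p.Prime) (N : ℕ)
    {A R : ℝ} (hA : 0 ≤ A) (hPA : A ≤ ∑ p ∈ P, (p : ℝ)⁻¹) (hR : 1 ≤ R) (hPR : (#P : ℝ) ≤ R) :
    (#{n ∈ Icc 1 N | ∀ p ∈ P, ¬p ∣ n} : ℝ)
      ≤ N * (2 * Real.exp (-A)) + Real.exp 1 * R ^ (4 * A + 6) := by
  obtain ⟨Q, hQP, hAQ, hQA⟩ :=
    exists_subset_le_sum_le_add_one (fun p _ ↦ Nat.cast_inv_le_one p) hA hPA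
  have hk := Nat.le_ceil (2 * (A + 1))
  have hk' := Nat.ceil_lt_add_one (by linarith : 0 ≤ 2 * (A + 1))
  set k := ⌈2 * (A + 1)⌉₊
  have htail : Real.exp 1 * ∑ p ∈ Q, (p : ℝ)⁻¹ - (2 * k : ℕ) ≤ -A := by
    have he : Real.exp 1 ≤ 2.8 := Real.exp_one_lt_d9.le.trans (by norm_num)
    have : Real.exp 1 * ∑ p ∈ Q, (p : ℝ)⁻¹ ≤ 2.8 * (A + 1) := by gcongr
    push_cast
    linarith
  calc (#{n ∈ Icc 1 N | ∀ p ∈ P, ¬p ∣ n} : ℝ)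
      ≤ #{n ∈ Icc 1 N | ∀ p ∈ Q, ¬p ∣ n} := by
        gcongr
    _ ≤ N * (Real.exp (-∑ p ∈ Q, (p : ℝ)⁻¹)
          + Real.exp (Real.exp 1 * ∑ p ∈ Q, (p : ℝ)⁻¹ - (2 * k : ℕ)))
        + Real.exp 1 * R ^ (2 * k) :=
        card_forall_not_dvd_le_exp (fun p hp ↦ hP p (hQP hp)) N k hR
          (le_trans (by exact_mod_cast card_le_card hQP) hPR)
    _ ≤ N * (Real.exp (-A) + Real.exp (-A)) + Real.exp 1 * R ^ (4 * A + 6) := by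
        rw [← Real.rpow_natCast R]
        gcongr
        push_cast
        linarith
    _ = N * (2 * Real.exp (-A)) + Real.exp 1 * R ^ (4 * A + 6) := by rw [two_mul (Real.exp (-A))]

end BrunSieve

section Counting

theorem card_exists_sq_dvd_le (N : ℕ) {W : ℕ} (hW : 0 < W) :
    (#{n ∈ Icc 1 N | ∃ m, W < m ∧ m ^ 2 ∣ n} : ℝ) ≤ N / W := by
  have hcover : {n ∈ Icc 1 N | ∃ m, W < m ∧ m ^ 2 ∣ n}
      ⊆ (Ioc W (W + N)).biUnion fun m ↦ {n ∈ Ioc 0 N | m ^ 2 ∣ n} := by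
    intro n hn
    simp only [mem_filter, mem_Icc, mem_biUnion, mem_Ioc] at hn ⊢
    obtain ⟨⟨hn0, hnN⟩, m, hWm, hmn⟩ := hn
    have hm : m ≤ n := (Nat.le_self_pow two_ne_zero m).trans (Nat.le_of_dvd hn0 hmn)
    exact ⟨m, ⟨hWm, by omega⟩, ⟨hn0, hnN⟩, hmn⟩
  calc (#{n ∈ Icc 1 N | ∃ m, W < m ∧ m ^ 2 ∣ n} : ℝ)
      ≤ ∑ m ∈ Ioc W (W + N), (#{n ∈ Ioc 0 N | m ^ 2 ∣ n} : ℝ) := by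
        exact_mod_cast (card_le_card hcover).trans card_biUnion_le
    _ ≤ ∑ m ∈ Ioc W (W + N), (N : ℝ) * ((m : ℝ) ^ 2)⁻¹ := by
        refine sum_le_sum fun m _ ↦ ?_
        rw [Nat.Ioc_filter_dvd_card_eq_div, ← div_eq_mul_inv, ← Nat.cast_pow]
        exact Nat.cast_div_le
    _ ≤ N * ((W : ℝ)⁻¹ - ((W + N : ℕ) : ℝ)⁻¹) := by
        rw [← mul_sum]
        gcongr
        exact sum_Ioc_inv_sq_le_sub hW.ne' (by omega)
    _ ≤ N / W := by
        rw [div_eq_mul_inv]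
        gcongr
        exact sub_le_self _ (by positivity)

theorem dvd_sigma1_of_dvd_add_one {n p d : ℕ} (hp : p.Prime) (hpn : p ∣ n) (hsq : ¬p ^ 2 ∣ n)
    (hd : d ∣ p + 1) : d ∣ sigma1 n := by
  obtain ⟨m, rfl⟩ := hpn
  have hcoprime : p.Coprime m :=
    hp.coprime_iff_not_dvd.mpr fun h ↦ hsq (sq p ▸ Nat.mul_dvd_mul_left p h)
  have hsigma : ArithmeticFunction.sigma 1 p = p + 1 := by
    rw [ArithmeticFunction.sigma_one_apply, hp.sum_divisors, add_comm]
  rw [sigma1, ArithmeticFunction.isMultiplicative_sigma.map_mul_of_coprime hcoprime, hsigma]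
  exact hd.mul_right _

theorem filter_exists_not_dvd_sigma1_subset (N : ℕ) (D y : ℝ) :
    {n ∈ Icc 1 N | ∃ d : ℕ, 0 < d ∧ (d : ℝ) ≤ D ∧ ¬d ∣ sigma1 n}
      ⊆ {n ∈ Icc 1 N | ∃ m, ⌊y⌋₊ < m ∧ m ^ 2 ∣ n}
        ∪ (Icc 1 ⌊D⌋₊).biUnion fun d ↦ {n ∈ Icc 1 N | ∀ p ∈ sievingPrimes d y, ¬p ∣ n} := by
  intro n hn
  obtain ⟨hnN, d, hd, hdD, hdvd⟩ := mem_filter.mp hn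
  by_cases hsieve : ∀ p ∈ sievingPrimes d y, ¬p ∣ n
  · exact mem_union_right _ (mem_biUnion.mpr
      ⟨d, mem_Icc.mpr ⟨hd, Nat.le_floor hdD⟩, mem_filter.mpr ⟨hnN, hsieve⟩⟩)
  · push Not at hsieve
    obtain ⟨p, hp, hpn⟩ := hsieve
    obtain ⟨hpIoc, hpprime, hdp⟩ := mem_filter.mp hp
    refine mem_union_left _ (mem_filter.mpr ⟨hnN, p, (mem_Ioc.mp hpIoc).1, ?_⟩)
    by_contra hsq
    exact hdvd (dvd_sigma1_of_dvd_add_one hpprime hpn hsq hdp)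

theorem card_exists_not_dvd_sigma1_le (N : ℕ) (D y : ℝ) :
    #{n ∈ Icc 1 N | ∃ d : ℕ, 0 < d ∧ (d : ℝ) ≤ D ∧ ¬d ∣ sigma1 n}
      ≤ #{n ∈ Icc 1 N | ∃ m, ⌊y⌋₊ < m ∧ m ^ 2 ∣ n}
        + ∑ d ∈ Icc 1 ⌊D⌋₊, #{n ∈ Icc 1 N | ∀ p ∈ sievingPrimes d y, ¬p ∣ n} :=
  (card_le_card (filter_exists_not_dvd_sigma1_subset N D y)).trans
    ((card_union_le _ _).trans (Nat.add_le_add_left card_biUnion_le _))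

theorem ceil_exp_exp_half_rpow_le {A y : ℝ} (hAy : A ≤ y) (hy : 200 ≤ y) :
    (⌈Real.exp (Real.exp (y / 2))⌉₊ : ℝ) ^ (4 * A + 6)
      ≤ Real.exp (Real.exp y) * Real.exp (-(y / 2)) := by
  set u := Real.exp (y / 2) with hu
  have hquadratic : 1 + y / 2 + (y / 2) ^ 2 / 2 ≤ u := Real.quadratic_le_exp_of_nonneg (by linarith)
  have hsq : Real.exp y = u * u := by rw [hu, ← Real.exp_add, add_halves]
  have hone : 1 ≤ (⌈Real.exp u⌉₊ : ℝ) := by exact_mod_cast Nat.ceil_pos.mpr (Real.exp_pos u)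
  have hceil : (⌈Real.exp u⌉₊ : ℝ) ≤ Real.exp (u + 1) := by
    rw [Real.exp_add]
    nlinarith [Nat.ceil_lt_add_one (Real.exp_pos u).le, Real.add_one_le_exp (1 : ℝ),
      Real.one_le_exp (x := u) (by linarith [Real.exp_pos (y / 2)])]
  calc (⌈Real.exp u⌉₊ : ℝ) ^ (4 * A + 6)
      ≤ (⌈Real.exp u⌉₊ : ℝ) ^ (4 * y + 6) := by gcongr
    _ ≤ Real.exp (u + 1) ^ (4 * y + 6) := by gcongr
    _ = Real.exp ((u + 1) * (4 * y + 6)) := by rw [← Real.exp_mul]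
    _ ≤ Real.exp (Real.exp y + -(y / 2)) := by
        rw [hsq]
        gcongr
        nlinarith
    _ = Real.exp (Real.exp y) * Real.exp (-(y / 2)) := Real.exp_add _ _

theorem card_forall_sievingPrimes_not_dvd_le {d : ℕ} {A y : ℝ} (hA : 0 ≤ A) (hAy : A ≤ y)
    (hy : 200 ≤ y) (hsum : A ≤ ∑ p ∈ sievingPrimes d y, (p : ℝ)⁻¹) :
    (#{n ∈ Icc 1 ⌊Real.exp (Real.exp y)⌋₊ | ∀ p ∈ sievingPrimes d y, ¬p ∣ n} : ℝ)
      ≤ Real.exp (Real.exp y)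
        * (2 * Real.exp (-A) + Real.exp 1 * Real.exp (-(y / 2))) := by
  have hone : (1 : ℝ) ≤ ⌈Real.exp (Real.exp (y / 2))⌉₊ := by
    exact_mod_cast Nat.ceil_pos.mpr (Real.exp_pos _)
  calc (#{n ∈ Icc 1 ⌊Real.exp (Real.exp y)⌋₊ | ∀ p ∈ sievingPrimes d y, ¬p ∣ n} : ℝ)
      ≤ ⌊Real.exp (Real.exp y)⌋₊ * (2 * Real.exp (-A))
          + Real.exp 1 * (⌈Real.exp (Real.exp (y / 2))⌉₊ : ℝ) ^ (4 * A + 6) :=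
        card_forall_not_dvd_le_of_le_sum_inv (fun p ↦ prime_of_mem_sievingPrimes) _ hA hsum hone
          (by exact_mod_cast card_sievingPrimes_le d y)
    _ ≤ Real.exp (Real.exp y) * (2 * Real.exp (-A))
          + Real.exp 1 * (Real.exp (Real.exp y) * Real.exp (-(y / 2))) := by
        gcongr
        · exact Nat.floor_le (Real.exp_pos _).le
        · exact ceil_exp_exp_half_rpow_le hAy hy
    _ = _ := by ring

theorem card_exists_sq_dvd_floor_exp_exp_le {y : ℝ} (hy : 1 ≤ y) :
    (#{n ∈ Icc 1 ⌊Real.exp (Real.exp y)⌋₊ | ∃ m, ⌊y⌋₊ < m ∧ m ^ 2 ∣ n} : ℝ)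
      ≤ Real.exp (Real.exp y) * (2 / y) := by
  have hfloor : 0 < ⌊y⌋₊ := Nat.floor_pos.mpr hy
  have hfloor1 : (1 : ℝ) ≤ ⌊y⌋₊ := by exact_mod_cast hfloor
  refine (card_exists_sq_dvd_le _ hfloor).trans ?_
  rw [mul_div_assoc', div_le_div_iff₀ (by linarith) (by linarith), mul_assoc]
  gcongr
  · exact Nat.floor_le (Real.exp_pos _).le
  · linarith [Nat.lt_floor_add_one y]

theorem eventually_card_exists_not_dvd_sigma1_le {ε : ℝ} (hε : 0 < ε) :
    ∀ᶠ y : ℝ in atTop,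
      (#{n ∈ Icc 1 ⌊Real.exp (Real.exp y)⌋₊ |
          ∃ d : ℕ, 0 < d ∧ (d : ℝ) ≤ y ^ (1 - ε) ∧ ¬d ∣ sigma1 n} : ℝ)
        ≤ Real.exp (Real.exp y) * (2 / y
          + y * (2 * Real.exp (-y ^ (ε / 2)) + Real.exp 1 * Real.exp (-(y / 2)))) := by
  filter_upwards [eventually_rpow_le_sum_sievingPrimes_inv hε, eventually_ge_atTop 200]
    with y hsum hy
  have hy0 : 0 < y := by linarith
  have hsieve : ∀ d ∈ Icc 1 ⌊y ^ (1 - ε)⌋₊,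
      (#{n ∈ Icc 1 ⌊Real.exp (Real.exp y)⌋₊ | ∀ p ∈ sievingPrimes d y, ¬p ∣ n} : ℝ)
        ≤ Real.exp (Real.exp y)
          * (2 * Real.exp (-y ^ (ε / 2)) + Real.exp 1 * Real.exp (-(y / 2))) := by
    intro d hd
    obtain ⟨hd1, hdy⟩ := mem_Icc.mp hd
    rw [Nat.le_floor_iff (by positivity)] at hdy
    have hA : 1 ≤ y ^ (ε / 2) := Real.one_le_rpow (by linarith) (by linarith)
    have hAy : y ^ (ε / 2) ≤ y :=
      calc y ^ (ε / 2) ≤ y ^ (ε / 2) * y ^ (ε / 2) := le_mul_of_one_le_left (by positivity) hA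
        _ ≤ y / d := rpow_half_mul_rpow_half_le_div hd1 hy0 hdy
        _ ≤ y := div_le_self hy0.le (by exact_mod_cast hd1)
    exact card_forall_sievingPrimes_not_dvd_le (by linarith) hAy hy (hsum d hd1 hdy)
  have hfloor : (⌊y ^ (1 - ε)⌋₊ : ℝ) ≤ y :=
    (Nat.floor_le (by positivity)).trans
      (Real.rpow_le_self_of_one_le (by linarith) (by linarith))
  have hsieve_sum := sum_le_sum hsieve
  rw [sum_const, Nat.card_Icc, Nat.add_sub_cancel, nsmul_eq_mul] at hsieve_sum
  rw [mul_add, mul_left_comm]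
  refine le_trans (by exact_mod_cast card_exists_not_dvd_sigma1_le _ _ y)
    (add_le_add (card_exists_sq_dvd_floor_exp_exp_le (by linarith)) (hsieve_sum.trans ?_))
  gcongr

theorem tendsto_mul_exp_neg_rpow {η : ℝ} (hη : 0 < η) :
    Tendsto (fun y : ℝ ↦ y * Real.exp (-y ^ η)) atTop (𝓝 0) := by
  refine ((tendsto_rpow_mul_exp_neg_mul_atTop_nhds_zero η⁻¹ 1 one_pos).comp
    (tendsto_rpow_atTop hη)).congr' ?_
  filter_upwards [eventually_ge_atTop 0] with y hy
  rw [Function.comp_apply, Real.rpow_rpow_inv hy hη.ne', neg_one_mul]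

theorem tendsto_two_div_add_mul_exp_neg {η : ℝ} (hη : 0 < η) :
    Tendsto (fun y : ℝ ↦ 2 / y
      + y * (2 * Real.exp (-y ^ η) + Real.exp 1 * Real.exp (-(y / 2)))) atTop (𝓝 0) := by
  have hdiv : Tendsto (fun y : ℝ ↦ 2 / y) atTop (𝓝 0) := tendsto_const_nhds.div_atTop tendsto_id
  have hhalf := tendsto_rpow_mul_exp_neg_mul_atTop_nhds_zero 1 (1 / 2) one_half_pos
  have h := (hdiv.add ((tendsto_mul_exp_neg_rpow hη).const_mul 2)).add
    (hhalf.const_mul (Real.exp 1))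
  simp only [mul_zero, add_zero] at h
  refine h.congr fun y ↦ ?_
  rw [Real.rpow_one, neg_mul, one_div_mul_eq_div]
  ring

end Counting

theorem sigma_div_by_all_small_d (ε : ℝ) (hε : 0 < ε) :
    (fun x : ℝ => (((Finset.Icc 1 ⌊x⌋₊).filter
        (fun n => ∃ d : ℕ, 0 < d ∧ (d : ℝ) ≤ (Real.log (Real.log x)) ^ (1 - ε) ∧
          ¬ d ∣ sigma1 n)).card : ℝ))
      =o[atTop] (fun x : ℝ => x) := by
  have hloglog : Tendsto (fun x : ℝ ↦ Real.log (Real.log x)) atTop atTop :=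
    Real.tendsto_log_atTop.comp Real.tendsto_log_atTop
  rw [Asymptotics.isLittleO_iff]
  intro c hc
  have hcount := hloglog.eventually (eventually_card_exists_not_dvd_sigma1_le hε)
  have herror := hloglog.eventually
    ((tendsto_two_div_add_mul_exp_neg (half_pos hε)).eventually_le_const hc)
  filter_upwards [hcount, herror, eventually_gt_atTop 1] with x hcount herror hx
  have hx0 : 0 < x := one_pos.trans hx
  rw [Real.exp_log (Real.log_pos hx), Real.exp_log hx0] at hcount
  rw [Real.norm_of_nonneg (Nat.cast_nonneg _), Real.norm_of_nonneg hx0.le, mul_comm]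
  exact hcount.trans (mul_le_mul_of_nonneg_left herror hx0.le)
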